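/- arXiv:1507.01712 — 2 statements merged into one kernel-verified Lean document; each statement's English description precedes it below -/
import Mathlib

section
/- For every α ∈ (0,1), s > 0 and ξ ≥ 0, the function z ↦ e^{−ξz} h_α(z,s) is integrable on ℝ and ∫_ℝ e^{−ξz} h_α(z,s) dz = e^{−s ξ^α}. -/
open MeasureTheory Set Real

/-- The stable subordinator density
`h_α(z,s) = (1/(2π)) ∫_ℝ exp(−iτz − s|τ|^α e^{−iπα·sgn(τ)/2}) dτ`. -/
noncomputable def hstable (α s z : ℝ) : ℂ :=
  ((2 * Real.pi)⁻¹ : ℝ) *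
    ∫ τ : ℝ, Complex.exp (-(Complex.I * τ * z) -
      ((s * |τ| ^ α : ℝ) : ℂ) *
        Complex.exp (-(Complex.I * ((Real.pi * α * Real.sign τ / 2 : ℝ) : ℂ))))

noncomputable def sG (α s : ℝ) (w : ℂ) : ℂ := Complex.exp (-(s : ℂ) * w ^ (α : ℂ))

noncomputable def sb (α s : ℝ) : ℝ := s * Real.cos (Real.pi * α / 2)

noncomputable def sK (α s x z : ℝ) : ℂ :=
  ∫ τ : ℝ, Complex.exp (((x : ℂ) + τ * Complex.I) * z) * sG α s ((x : ℂ) + τ * Complex.I)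

lemma sb_pos {α s : ℝ} (hα : α ∈ Set.Ioo (0 : ℝ) 1) (hs : 0 < s) : 0 < sb α s := by
  apply mul_pos hs
  apply Real.cos_pos_of_mem_Ioo
  obtain ⟨h0, h1⟩ := hα
  constructor <;> nlinarith [Real.pi_pos]

lemma sG_norm {α s : ℝ} (hα : α ∈ Set.Ioo (0 : ℝ) 1) (hs : 0 < s) {w : ℂ} (hw : 0 ≤ w.re) :
    ‖sG α s w‖ ≤ Real.exp (-sb α s * ‖w‖ ^ α) := by
  obtain ⟨h0, h1⟩ := hα
  rw [sG, Complex.norm_exp]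
  apply Real.exp_le_exp.mpr
  by_cases hw0 : w = 0
  · subst hw0
    have : (α : ℂ) ≠ 0 := by exact_mod_cast h0.ne'
    simp [Complex.zero_cpow this, Real.zero_rpow h0.ne']
  have e : (w ^ (α : ℂ)).re = ‖w‖ ^ α * Real.cos (α * Complex.arg w) := by
    rw [Complex.cpow_def_of_ne_zero hw0, Complex.exp_re]
    simp [Complex.log_re, Complex.log_im, Real.rpow_def_of_pos (norm_pos_iff.mpr hw0), mul_comm]
  have e2 : (-(s : ℂ) * w ^ (α : ℂ)).re = -(s * (‖w‖ ^ α * Real.cos (α * Complex.arg w))) := by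
    rw [← e]; simp
  rw [e2, sb]
  have ha : |Complex.arg w| ≤ Real.pi / 2 := Complex.abs_arg_le_pi_div_two_iff.mpr hw
  have hc : Real.cos (Real.pi * α / 2) ≤ Real.cos (α * Complex.arg w) := by
    rw [← Real.cos_abs (α * Complex.arg w)]
    apply Real.cos_le_cos_of_nonneg_of_le_pi (abs_nonneg _)
    · nlinarith [Real.pi_pos]
    · rw [abs_mul, abs_of_pos h0]; nlinarith
  have hn : 0 ≤ ‖w‖ ^ α := by positivity
  nlinarith [mul_le_mul_of_nonneg_left hc (mul_nonneg hs.le hn)]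

lemma sE_int {α b : ℝ} (h0 : 0 < α) (hb : 0 < b) :
    Integrable (fun τ : ℝ => Real.exp (-b * |τ| ^ α)) := by
  have h := integrableOn_rpow_mul_exp_neg_mul_rpow (s := 0) (by norm_num) h0 hb
  simp only [Real.rpow_zero, one_mul] at h
  have h1 : IntegrableOn (fun τ : ℝ => Real.exp (-b * |τ| ^ α)) (Ioi 0) := by
    refine h.congr_fun (fun x hx => ?_) measurableSet_Ioi
    simp only [abs_of_pos (mem_Ioi.mp hx)]
  have h2 : IntegrableOn (fun τ : ℝ => Real.exp (-b * |τ| ^ α)) (Iio 0) := by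
    have h4 : IntegrableOn (fun τ : ℝ => Real.exp (-b * |τ| ^ α)) (Ioi (-0)) := by simpa using h1
    simpa using h4.comp_neg_Iio
  have h3 : IntegrableOn (fun τ : ℝ => Real.exp (-b * |τ| ^ α)) (Iic 0 ∪ Ioi 0) :=
    (integrableOn_Iic_iff_integrableOn_Iio (by simp) |>.mpr h2).union h1
  rwa [Iic_union_Ioi, integrableOn_univ] at h3

lemma sG_cont {α s : ℝ} (hα : α ∈ Set.Ioo (0 : ℝ) 1) {w : ℂ} (hw : 0 ≤ w.re) :
    ContinuousAt (sG α s) w := by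
  unfold sG
  have := Complex.continuousAt_cpow_const_of_re_pos (z := w) (w := (α : ℂ)) (Or.inl hw) (by simpa using hα.1)
  fun_prop

lemma sG_line_cont {α s x : ℝ} (hα : α ∈ Set.Ioo (0 : ℝ) 1) (hx : 0 ≤ x) :
    Continuous (fun τ : ℝ => sG α s ((x : ℂ) + τ * Complex.I)) := by
  rw [continuous_iff_continuousAt]
  intro τ
  exact ContinuousAt.comp (f := fun τ : ℝ => (x : ℂ) + τ * Complex.I) (sG_cont hα (by simpa using hx)) (by fun_prop)

lemma line_norm (x τ : ℝ) : |τ| ≤ ‖(x : ℂ) + τ * Complex.I‖ := by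
  simpa using Complex.abs_im_le_norm ((x : ℂ) + τ * Complex.I)

lemma line_norm' (x τ : ℝ) : |x| ≤ ‖(x : ℂ) + τ * Complex.I‖ := by
  simpa using Complex.abs_re_le_norm ((x : ℂ) + τ * Complex.I)

lemma sG_line {α s x : ℝ} (hα : α ∈ Set.Ioo (0 : ℝ) 1) (hs : 0 < s) (hx : 0 ≤ x) (τ : ℝ) :
    ‖sG α s ((x : ℂ) + τ * Complex.I)‖ ≤ Real.exp (-sb α s * |τ| ^ α) := by
  refine (sG_norm hα hs (by simpa using hx)).trans (Real.exp_le_exp.mpr ?_)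
  have := Real.rpow_le_rpow (abs_nonneg _) (line_norm x τ) hα.1.le
  nlinarith [sb_pos hα hs]

lemma sG_line_int {α s x : ℝ} (hα : α ∈ Set.Ioo (0 : ℝ) 1) (hs : 0 < s) (hx : 0 ≤ x) :
    Integrable (fun τ : ℝ => sG α s ((x : ℂ) + τ * Complex.I)) :=
  (sE_int hα.1 (sb_pos hα hs)).mono' (sG_line_cont hα hx).aestronglyMeasurable
    (Filter.Eventually.of_forall (sG_line hα hs hx))

lemma exp_line (x z τ : ℝ) : ‖Complex.exp (((x : ℂ) + τ * Complex.I) * z)‖ = Real.exp (x * z) := by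
  rw [Complex.norm_exp]; simp

lemma sK_integrand_int {α s x : ℝ} (hα : α ∈ Set.Ioo (0 : ℝ) 1) (hs : 0 < s) (hx : 0 ≤ x) (z : ℝ) :
    Integrable (fun τ : ℝ => Complex.exp (((x : ℂ) + τ * Complex.I) * z) *
      sG α s ((x : ℂ) + τ * Complex.I)) := by
  refine (sG_line_int hα hs hx).bdd_mul (c := Real.exp (x * z)) (by fun_prop) ?_
  exact Filter.Eventually.of_forall fun τ => (exp_line x z τ).le

lemma sK_norm {α s x : ℝ} (hα : α ∈ Set.Ioo (0 : ℝ) 1) (hs : 0 < s) (hx : 0 ≤ x) (z : ℝ) :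
    ‖sK α s x z‖ ≤ Real.exp (x * z) * ∫ τ : ℝ, Real.exp (-sb α s * |τ| ^ α) := by
  rw [← integral_const_mul]
  refine norm_integral_le_of_norm_le ((sE_int hα.1 (sb_pos hα hs)).const_mul _)
    (Filter.Eventually.of_forall fun τ => ?_)
  rw [norm_mul, exp_line]
  gcongr
  exact sG_line hα hs hx τ

lemma real_mul_cpow {r : ℝ} (hr : r ≠ 0 ∧ 0 ≤ r) {w : ℂ} (hw : w ≠ 0) (α : ℝ) :
    ((r : ℂ) * w) ^ (α : ℂ) = ((r ^ α : ℝ) : ℂ) * w ^ (α : ℂ) := by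
  have hr' : 0 < r := lt_of_le_of_ne hr.2 hr.1.symm
  have h0 : (r : ℂ) ≠ 0 := by exact_mod_cast hr.1
  rw [Complex.ofReal_cpow hr.2, Complex.cpow_def_of_ne_zero (mul_ne_zero h0 hw),
    Complex.log_ofReal_mul hr' hw, Complex.cpow_def_of_ne_zero h0,
    Complex.cpow_def_of_ne_zero hw, ← Complex.exp_add, Complex.ofReal_log hr.2, add_mul]

lemma hstable_eq {α s : ℝ} (hα : α ∈ Set.Ioo (0 : ℝ) 1) (z : ℝ) :
    hstable α s z = ((2 * Real.pi)⁻¹ : ℝ) * sK α s 0 z := by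
  rw [hstable, sK, ← integral_neg_eq_self]
  congr 2
  ext τ
  rw [sG, ← Complex.exp_add]
  congr 1
  have key : (((0:ℝ) : ℂ) + τ * Complex.I) ^ (α : ℂ) = ((|τ| ^ α : ℝ) : ℂ) *
        Complex.exp ((Complex.I * ((Real.pi * α * Real.sign τ / 2 : ℝ) : ℂ))) := by
    have hα0 : (α : ℂ) ≠ 0 := by exact_mod_cast hα.1.ne'
    rcases lt_trichotomy τ 0 with h | h | h
    · have : (((0:ℝ) : ℂ) + τ * Complex.I) = ((|τ| : ℝ) : ℂ) * (-Complex.I) := by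
        rw [abs_of_neg h]; push_cast; ring
      rw [this, real_mul_cpow ⟨by simpa using h.ne, abs_nonneg _⟩ (by simp)]
      congr 1
      rw [Complex.cpow_def_of_ne_zero (by simp), Complex.log_neg_I, Real.sign_of_neg h]
      congr 1
      push_cast; ring
    · subst h; simp [Complex.zero_cpow hα0, Real.zero_rpow hα.1.ne']
    · have : (((0:ℝ) : ℂ) + τ * Complex.I) = ((|τ| : ℝ) : ℂ) * (Complex.I) := by
        rw [abs_of_pos h]; push_cast; ring
      rw [this, real_mul_cpow ⟨by simpa using h.ne', abs_nonneg _⟩ (by simp)]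
      congr 1
      rw [Complex.cpow_def_of_ne_zero (by simp), Complex.log_I, Real.sign_of_pos h]
      congr 1
      push_cast; ring
  rw [key, abs_neg, Real.sign_neg]
  push_cast
  ring_nf

lemma sK_cont {α s : ℝ} (hα : α ∈ Set.Ioo (0 : ℝ) 1) (hs : 0 < s) :
    Continuous (fun z => sK α s 0 z) := by
  unfold sK
  refine continuous_of_dominated (bound := fun τ => Real.exp (-sb α s * |τ| ^ α))
    (fun z => (sK_integrand_int hα hs le_rfl z).aestronglyMeasurable) (fun z => ?_)
    (sE_int hα.1 (sb_pos hα hs)) (Filter.Eventually.of_forall fun τ => by fun_prop)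
  refine Filter.Eventually.of_forall fun τ => ?_
  rw [norm_mul, exp_line]
  simpa using sG_line hα hs le_rfl τ

lemma sG_deriv {α s : ℝ} {w : ℂ} (hw : 0 < w.re) :
    HasDerivAt (sG α s) (-(s : ℂ) * (α * w ^ ((α : ℂ) - 1)) * sG α s w) w := by
  have h : HasDerivAt (fun w : ℂ => w ^ (α : ℂ)) (α * w ^ ((α : ℂ) - 1) * 1) w :=
    (hasDerivAt_id w).cpow_const (Or.inl hw)
  have := (h.const_mul (-(s : ℂ))).cexp
  have h' : HasDerivAt (sG α s) _ w := this
  exact h'.congr_deriv (by rw [sG]; ring)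

lemma horiz {α s x : ℝ} (hα : α ∈ Set.Ioo (0 : ℝ) 1) (hs : 0 < s) (hx : 0 ≤ x) (z : ℝ)
    (u : ℝ → ℝ) (hu : ∀ T, |u T| = |T|) :
    Filter.Tendsto (fun T : ℝ => ∫ t : ℝ in (0:ℝ)..x,
      Complex.exp (((t : ℂ) + (u T : ℝ) * Complex.I) * z) * sG α s ((t : ℂ) + (u T : ℝ) * Complex.I))
      Filter.atTop (nhds 0) := by
  have hb := sb_pos hα hs
  have h1 : Filter.Tendsto (fun T : ℝ => Real.exp (x * |z|) * Real.exp (-sb α s * T ^ α) * |x - 0|)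
      Filter.atTop (nhds 0) := by
    have : Filter.Tendsto (fun T : ℝ => Real.exp (-sb α s * T ^ α)) Filter.atTop (nhds 0) := by
      apply Real.tendsto_exp_atBot.comp
      exact (tendsto_rpow_atTop hα.1).const_mul_atTop_of_neg (by linarith)
    simpa using (this.const_mul (Real.exp (x * |z|))).mul_const |x - 0|
  refine squeeze_zero_norm' ?_ h1
  filter_upwards [Filter.eventually_gt_atTop 0] with T hT
  apply intervalIntegral.norm_integral_le_of_norm_le_const
  intro t ht
  rw [uIoc_of_le hx] at ht
  rw [norm_mul, exp_line]
  have h2 := sG_line hα hs ht.1.le (u T)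
  rw [hu, abs_of_pos hT] at h2
  have h3 : t * z ≤ x * |z| := by
    nlinarith [abs_nonneg z, le_abs_self z, ht.1, ht.2, mul_le_mul_of_nonneg_left (le_abs_self z) ht.1.le, mul_le_mul_of_nonneg_right ht.2 (abs_nonneg z)]
  gcongr

lemma sK_shift {α s x : ℝ} (hα : α ∈ Set.Ioo (0 : ℝ) 1) (hs : 0 < s) (hx : 0 ≤ x) (z : ℝ) :
    sK α s x z = sK α s 0 z := by
  have rect : ∀ T : ℝ, 0 < T →
    (∫ t : ℝ in (0:ℝ)..x, Complex.exp (((t : ℂ) + ((-T : ℝ) : ℂ) * Complex.I) * z) * sG α s ((t : ℂ) + ((-T : ℝ) : ℂ) * Complex.I)) -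
    (∫ t : ℝ in (0:ℝ)..x, Complex.exp (((t : ℂ) + (T : ℝ) * Complex.I) * z) * sG α s ((t : ℂ) + (T : ℝ) * Complex.I)) +
    Complex.I • (∫ t : ℝ in (-T)..T, Complex.exp (((x : ℂ) + (t : ℝ) * Complex.I) * z) * sG α s ((x : ℂ) + (t : ℝ) * Complex.I)) -
    Complex.I • (∫ t : ℝ in (-T)..T, Complex.exp ((((0:ℝ) : ℂ) + (t : ℝ) * Complex.I) * z) * sG α s (((0:ℝ) : ℂ) + (t : ℝ) * Complex.I)) = 0 := by
    intro T hT
    have := Complex.integral_boundary_rect_eq_zero_of_continuousOn_of_differentiableOn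
      (fun w => Complex.exp (w * z) * sG α s w) ⟨0, -T⟩ ⟨x, T⟩ ?_ ?_
    · exact this
    · intro w hw
      rw [Complex.mem_reProdIm] at hw
      have h1 := hw.1
      simp only [uIcc_of_le hx] at h1
      have := sG_cont (s := s) hα h1.1
      refine ContinuousAt.continuousWithinAt (ContinuousAt.mul (by fun_prop) this)
    · intro w hw
      rw [Complex.mem_reProdIm] at hw
      have h1 := hw.1
      simp only [min_eq_left hx, max_eq_right hx] at h1
      have := (sG_deriv (α := α) (s := s) h1.1).differentiableAt
      refine DifferentiableAt.differentiableWithinAt (DifferentiableAt.mul (by fun_prop) this)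
  have l1 := horiz hα hs hx z (fun T => -T) (by simp)
  have l2 := horiz hα hs hx z (fun T => T) (by simp)
  have l3 := intervalIntegral_tendsto_integral (sK_integrand_int hα hs hx z)
    Filter.tendsto_neg_atTop_atBot Filter.tendsto_id
  have l4 := intervalIntegral_tendsto_integral (sK_integrand_int hα hs le_rfl z)
    Filter.tendsto_neg_atTop_atBot Filter.tendsto_id
  have l := ((l1.sub l2).add (l3.const_smul Complex.I)).sub (l4.const_smul Complex.I)
  have l' := l.congr' (f₂ := fun _ => (0:ℂ)) (by
    filter_upwards [Filter.eventually_gt_atTop 0] with T hT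
    exact rect T hT)
  have := tendsto_nhds_unique l' tendsto_const_nhds
  change 0 - 0 + Complex.I • sK α s x z - Complex.I • sK α s 0 z = 0 at this
  rw [sub_zero, zero_add, ← smul_sub, smul_eq_zero, sub_eq_zero] at this
  exact this.resolve_left Complex.I_ne_zero

lemma sK_neg {α s : ℝ} (hα : α ∈ Set.Ioo (0 : ℝ) 1) (hs : 0 < s) {z : ℝ} (hz : z < 0) :
    sK α s 0 z = 0 := by
  have h1 : Filter.Tendsto (fun x : ℝ => Real.exp (x * z) * ∫ τ : ℝ, Real.exp (-sb α s * |τ| ^ α))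
      Filter.atTop (nhds 0) := by
    have : Filter.Tendsto (fun x : ℝ => Real.exp (x * z)) Filter.atTop (nhds 0) :=
      Real.tendsto_exp_atBot.comp (Filter.tendsto_id.atTop_mul_const_of_neg hz)
    simpa using this.mul_const (∫ τ : ℝ, Real.exp (-sb α s * |τ| ^ α))
  rw [← norm_le_zero_iff]
  refine ge_of_tendsto h1 ?_
  filter_upwards [Filter.eventually_ge_atTop 0] with x hx
  rw [← sK_shift hα hs hx z]
  exact sK_norm hα hs hx z

lemma ibp (f f' : ℝ → ℂ) (z : ℝ) (hf : ∀ τ, HasDerivAt f (f' τ) τ) (i1 : Integrable f)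
    (i2 : Integrable f') :
    ∫ τ : ℝ, Complex.exp (τ * Complex.I * z) * f' τ =
      -(Complex.I * z) * ∫ τ : ℝ, Complex.exp (τ * Complex.I * z) * f τ := by
  have hb : ∀ τ : ℝ, ‖Complex.exp (τ * Complex.I * z)‖ ≤ 1 := fun τ => by
    rw [Complex.norm_exp]; simp
  have hm : AEStronglyMeasurable (fun τ : ℝ => Complex.exp (τ * Complex.I * z)) volume := by fun_prop
  have J1 := i1.bdd_mul hm (Filter.Eventually.of_forall hb)
  have J2 := i2.bdd_mul hm (Filter.Eventually.of_forall hb)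
  have hu : ∀ τ : ℝ, HasDerivAt (fun τ : ℝ => Complex.exp (τ * Complex.I * z))
      ((Complex.I * z) * Complex.exp (τ * Complex.I * z)) τ := by
    intro τ
    have h0 : HasDerivAt (fun τ : ℝ => (τ : ℂ) * Complex.I * z) (1 * Complex.I * z) τ :=
      ((Complex.ofRealCLM.hasDerivAt (x := τ)).mul_const _).mul_const _
    convert h0.cexp using 1
    ring
  have := integral_mul_deriv_eq_deriv_mul_of_integrable (fun x _ => hu x) (fun x _ => hf x) J2
    (by
      refine (J1.const_mul (Complex.I * z)).congr (Filter.Eventually.of_forall fun τ => ?_)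
      simp only [Pi.mul_apply]; ring) J1
  rw [this, ← integral_const_mul, ← integral_neg]
  congr 1; ext τ; ring

noncomputable def sG1 (α s : ℝ) (w : ℂ) : ℂ := -(s : ℂ) * (α * w ^ ((α : ℂ) - 1)) * sG α s w
noncomputable def sG2 (α s : ℝ) (w : ℂ) : ℂ :=
  -(s : ℂ) * (α * (((α : ℂ) - 1) * w ^ ((α : ℂ) - 1 - 1))) * sG α s w +
  -(s : ℂ) * (α * w ^ ((α : ℂ) - 1)) * sG1 α s w

lemma sG1_deriv {α s : ℝ} {w : ℂ} (hw : 0 < w.re) :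
    HasDerivAt (sG1 α s) (sG2 α s w) w := by
  have h : HasDerivAt (fun w : ℂ => w ^ ((α : ℂ) - 1)) (((α : ℂ) - 1) * w ^ ((α : ℂ) - 1 - 1) * 1) w :=
    (hasDerivAt_id w).cpow_const (Or.inl hw)
  have := ((h.const_mul (α : ℂ)).const_mul (-(s : ℂ))).mul (sG_deriv (α := α) (s := s) hw)
  have h' : HasDerivAt (sG1 α s) _ w := this
  exact h'.congr_deriv (by rw [sG2, sG1]; ring)

lemma cpow_norm {w : ℂ} (_ : w ≠ 0) (β : ℝ) : ‖w ^ (β : ℂ)‖ = ‖w‖ ^ β :=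
  Complex.norm_cpow_real w β

lemma sG1_norm {α s : ℝ} (hα : α ∈ Set.Ioo (0 : ℝ) 1) (hs : 0 < s) {w : ℂ} (hw : 0 < w.re) :
    ‖sG1 α s w‖ = s * α * ‖w‖ ^ (α - 1) * ‖sG α s w‖ := by
  have hw0 : w ≠ 0 := by rintro rfl; simp at hw
  have e : ((α : ℂ) - 1) = ((α - 1 : ℝ) : ℂ) := by push_cast; ring
  rw [sG1, e, norm_mul, norm_mul, norm_mul, cpow_norm hw0, norm_neg, Complex.norm_real, Complex.norm_real]
  simp only [Real.norm_eq_abs, abs_of_pos hs, abs_of_pos hα.1]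
  ring

lemma sG2_norm {α s : ℝ} (hα : α ∈ Set.Ioo (0 : ℝ) 1) (hs : 0 < s) {w : ℂ} (hw : 0 < w.re) :
    ‖sG2 α s w‖ ≤ (s + s ^ 2 / sb α s) * ‖w‖ ^ (α - 2) := by
  have hw0 : w ≠ 0 := by rintro rfl; simp at hw
  have hn : 0 < ‖w‖ := norm_pos_iff.mpr hw0
  have hb := sb_pos hα hs
  have e : ((α : ℂ) - 1) = ((α - 1 : ℝ) : ℂ) := by push_cast; ring
  have e2 : ((α : ℂ) - 1 - 1) = ((α - 2 : ℝ) : ℂ) := by push_cast; ring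
  have hg := sG_norm hα hs hw.le
  have hg1 : ‖sG α s w‖ ≤ 1 := hg.trans (by
    rw [Real.exp_le_one_iff]; nlinarith [Real.rpow_pos_of_pos hn α])
  have hg2 : ‖w‖ ^ α * ‖sG α s w‖ ≤ 1 / sb α s := by
    have : Real.exp (-sb α s * ‖w‖ ^ α) * (sb α s * ‖w‖ ^ α) ≤ 1 := by
      have h3 := Real.add_one_le_exp (sb α s * ‖w‖ ^ α)
      have h4 : Real.exp (-sb α s * ‖w‖ ^ α) * Real.exp (sb α s * ‖w‖ ^ α) = 1 := by
        rw [← Real.exp_add]; simp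
      rw [← h4]; gcongr; linarith
    rw [le_div_iff₀ hb]
    refine le_trans ?_ this
    have : 0 ≤ sb α s * ‖w‖ ^ α := by positivity
    nlinarith [mul_le_mul_of_nonneg_right hg this]
  have hp : ‖w‖ ^ (α - 1) * ‖w‖ ^ (α - 1) = ‖w‖ ^ (α - 2) * ‖w‖ ^ α := by
    rw [← Real.rpow_add hn, ← Real.rpow_add hn]; congr 1; ring
  have n1 : ‖-(s : ℂ) * (α * (((α : ℂ) - 1) * w ^ ((α : ℂ) - 1 - 1))) * sG α s w‖ ≤ s * ‖w‖ ^ (α - 2) := by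
    have : ‖-(s : ℂ) * (α * (((α : ℂ) - 1) * w ^ ((α : ℂ) - 1 - 1))) * sG α s w‖ =
        s * (α * ((1 - α) * ‖w‖ ^ (α - 2))) * ‖sG α s w‖ := by
      rw [e2, e, norm_mul, norm_mul, norm_mul, norm_mul, cpow_norm hw0, Complex.norm_real, norm_neg, Complex.norm_real, Complex.norm_real]
      simp only [Real.norm_eq_abs, abs_of_pos hs, abs_of_pos hα.1]
      rw [abs_of_neg (by linarith [hα.2])]; ring
    rw [this]
    have hP : 0 < ‖w‖ ^ (α - 2) := by positivity
    have h5 : α * (1 - α) ≤ 1 := by nlinarith [hα.1, hα.2]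
    calc s * (α * ((1 - α) * ‖w‖ ^ (α - 2))) * ‖sG α s w‖
        = s * ‖w‖ ^ (α - 2) * ((α * (1 - α)) * ‖sG α s w‖) := by ring
      _ ≤ s * ‖w‖ ^ (α - 2) * (1 * 1) := by gcongr
      _ = _ := by ring
  have n2 : ‖-(s : ℂ) * (α * w ^ ((α : ℂ) - 1)) * sG1 α s w‖ ≤ s ^ 2 / sb α s * ‖w‖ ^ (α - 2) := by
    rw [norm_mul, sG1_norm hα hs hw, e, norm_mul, norm_mul, cpow_norm hw0, norm_neg, Complex.norm_real, Complex.norm_real]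
    simp only [Real.norm_eq_abs, abs_of_pos hs, abs_of_pos hα.1]
    have h5 : α * α ≤ 1 := by nlinarith [hα.1, hα.2]
    calc s * (α * ‖w‖ ^ (α - 1)) * (s * α * ‖w‖ ^ (α - 1) * ‖sG α s w‖)
        = s ^ 2 * (α * α) * (‖w‖ ^ (α - 1) * ‖w‖ ^ (α - 1)) * ‖sG α s w‖ := by ring
      _ = s ^ 2 * (α * α) * ‖w‖ ^ (α - 2) * (‖w‖ ^ α * ‖sG α s w‖) := by rw [hp]; ring
      _ ≤ s ^ 2 * 1 * ‖w‖ ^ (α - 2) * (1 / sb α s) := by gcongr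
      _ = _ := by ring
  rw [sG2, add_mul]
  exact (norm_add_le _ _).trans (add_le_add n1 n2)

lemma line_deriv (x τ : ℝ) :
    HasDerivAt (fun τ : ℝ => (x : ℂ) + τ * Complex.I) Complex.I τ := by
  have h0 : HasDerivAt (fun τ : ℝ => (τ : ℂ) * Complex.I) (1 * Complex.I) τ :=
      ((Complex.ofRealCLM.hasDerivAt (x := τ)).mul_const _)
  simpa using h0.const_add (x : ℂ)

lemma line_pow {x : ℝ} (hx : 0 < x) (α τ : ℝ) :
    ‖(x : ℂ) + τ * Complex.I‖ ^ (α - 2) =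
      x ^ (α - 2) * ((1 : ℝ) + ‖τ / x‖ ^ 2) ^ (-(2 - α) / 2) := by
  have h1 : ‖(x : ℂ) + τ * Complex.I‖ = x * Real.sqrt (1 + ‖τ / x‖ ^ 2) := by
    rw [Complex.norm_add_mul_I, Real.norm_eq_abs, sq_abs]
    nth_rw 2 [← Real.sqrt_sq hx.le]
    rw [← Real.sqrt_mul (by positivity)]
    congr 1; field_simp
  rw [h1, Real.mul_rpow hx.le (by positivity), Real.sqrt_eq_rpow, ← Real.rpow_mul (by positivity)]
  congr 2; ring

noncomputable def sD (α : ℝ) : ℝ := ∫ u : ℝ, ((1 : ℝ) + ‖u‖ ^ 2) ^ (-(2 - α) / 2)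

lemma sD_int {α : ℝ} (hα : α ∈ Set.Ioo (0 : ℝ) 1) :
    Integrable (fun u : ℝ => ((1 : ℝ) + ‖u‖ ^ 2) ^ (-(2 - α) / 2)) :=
  integrable_rpow_neg_one_add_norm_sq (by simp; linarith [hα.2])

lemma line_pow_int {α x : ℝ} (hα : α ∈ Set.Ioo (0 : ℝ) 1) (hx : 0 < x) :
    Integrable (fun τ : ℝ => ‖(x : ℂ) + τ * Complex.I‖ ^ (α - 2)) := by
  simp_rw [line_pow hx]
  exact ((sD_int hα).comp_div hx.ne').const_mul _

lemma line_pow_integral {α x : ℝ} (hx : 0 < x) :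
    ∫ τ : ℝ, ‖(x : ℂ) + τ * Complex.I‖ ^ (α - 2) = x ^ (α - 2) * (x * sD α) := by
  simp_rw [line_pow hx]
  rw [integral_const_mul,
    Measure.integral_comp_div (fun u : ℝ => ((1 : ℝ) + ‖u‖ ^ 2) ^ (-(2 - α) / 2)) x,
    abs_of_pos hx, smul_eq_mul, sD]

lemma sK_eq (α s x z : ℝ) : sK α s x z = (Real.exp (x * z) : ℝ) *
    ∫ τ : ℝ, Complex.exp (τ * Complex.I * z) * sG α s ((x : ℂ) + τ * Complex.I) := by
  rw [sK, ← integral_const_mul]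
  congr 1; ext τ
  rw [add_mul, Complex.exp_add]; push_cast; ring

lemma sK_decay {α s : ℝ} (hα : α ∈ Set.Ioo (0 : ℝ) 1) (hs : 0 < s) {z : ℝ} (hz : 0 < z) :
    ‖sK α s 0 z‖ ≤ Real.exp 1 * ((s + s ^ 2 / sb α s) * sD α) * z ^ (-(1 + α)) := by
  set x : ℝ := z⁻¹ with hxd
  have hx : 0 < x := inv_pos.mpr hz
  have hb := sb_pos hα hs
  have hre : ∀ τ : ℝ, 0 < ((x : ℂ) + τ * Complex.I).re := fun τ => by simpa using hx
  let f : ℝ → ℂ := fun τ => sG α s ((x : ℂ) + τ * Complex.I)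
  let f1 : ℝ → ℂ := fun τ => sG1 α s ((x : ℂ) + τ * Complex.I) * Complex.I
  let f2 : ℝ → ℂ := fun τ => sG2 α s ((x : ℂ) + τ * Complex.I) * Complex.I * Complex.I
  have d1 : ∀ τ, HasDerivAt f (f1 τ) τ := fun τ =>
    HasDerivAt.comp (h₂ := sG α s) τ (sG_deriv (hre τ)) (line_deriv x τ)
  have d2 : ∀ τ, HasDerivAt f1 (f2 τ) τ := fun τ =>
    (HasDerivAt.comp (h₂ := sG1 α s) τ (sG1_deriv (hre τ)) (line_deriv x τ)).mul_const _
  have i0 : Integrable f := sG_line_int hα hs hx.le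
  have i1 : Integrable f1 := by
    have c1 : Continuous f1 := continuous_iff_continuousAt.mpr fun τ => (d2 τ).continuousAt
    refine ((sE_int hα.1 hb).const_mul (s * α * x ^ (α - 1))).mono' c1.aestronglyMeasurable
      (Filter.Eventually.of_forall fun τ => ?_)
    simp only [f1, norm_mul, Complex.norm_I, mul_one]
    rw [sG1_norm hα hs (hre τ)]
    have hl := line_norm' x τ
    rw [abs_of_pos hx] at hl
    have h1 := Real.rpow_le_rpow_of_nonpos hx hl (by linarith [hα.2] : α - 1 ≤ 0)
    have h2 := sG_line hα hs hx.le τ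
    have := hα.1
    gcongr
  have i2 : Integrable f2 := by
    have m2 : Measurable f2 := by
      simp only [f2, sG2, sG1, sG]
      fun_prop
    refine ((line_pow_int hα hx).const_mul (s + s ^ 2 / sb α s)).mono' m2.aestronglyMeasurable
      (Filter.Eventually.of_forall fun τ => ?_)
    simp only [f2, norm_mul, Complex.norm_I, mul_one]
    exact sG2_norm hα hs (hre τ)
  have e1 := ibp f f1 z d1 i0 i1
  have e2 := ibp f1 f2 z d2 i1 i2
  have b2 : ‖∫ τ : ℝ, Complex.exp (τ * Complex.I * z) * f2 τ‖ ≤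
      (s + s ^ 2 / sb α s) * (x ^ (α - 2) * (x * sD α)) := by
    rw [← line_pow_integral hx, ← integral_const_mul]
    refine norm_integral_le_of_norm_le ((line_pow_int hα hx).const_mul _)
      (Filter.Eventually.of_forall fun τ => ?_)
    have : ‖Complex.exp (τ * Complex.I * z)‖ = 1 := by rw [Complex.norm_exp]; simp
    rw [norm_mul, this, one_mul]
    simp only [f2, norm_mul, Complex.norm_I, mul_one]
    exact sG2_norm hα hs (hre τ)
  rw [e2, e1, ← mul_assoc, norm_mul] at b2
  have n : ‖-(Complex.I * (z : ℂ)) * -(Complex.I * (z : ℂ))‖ = z ^ 2 := by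
    simp [abs_of_pos hz]; ring
  rw [n] at b2
  rw [← sK_shift hα hs hx.le z, sK_eq, norm_mul, Complex.norm_real, Real.norm_eq_abs, abs_of_pos (Real.exp_pos _)]
  have hxz : x * z = 1 := inv_mul_cancel₀ hz.ne'
  rw [hxz, mul_assoc]
  refine mul_le_mul_of_nonneg_left ?_ (Real.exp_pos _).le
  have hp : x ^ (α - 2) * x = z ^ 2 * z ^ (-(1 + α)) := by
    rw [hxd, Real.inv_rpow hz.le, ← Real.rpow_neg hz.le, ← Real.rpow_neg_one z, ← Real.rpow_natCast,
      ← Real.rpow_add hz, ← Real.rpow_add hz]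
    congr 1; push_cast; ring
  have hz2 : 0 < z ^ 2 := by positivity
  refine le_of_mul_le_mul_left ?_ hz2
  refine b2.trans (le_of_eq ?_)
  rw [← mul_assoc (x ^ (α - 2)), hp]; ring

lemma sK_integrable {α s ξ : ℝ} (hα : α ∈ Set.Ioo (0 : ℝ) 1) (hs : 0 < s) (hξ : 0 ≤ ξ) :
    Integrable (fun z : ℝ => ((Real.exp (-ξ * z) : ℝ) : ℂ) * sK α s 0 z) := by
  set M : ℝ := ∫ τ : ℝ, Real.exp (-sb α s * |τ| ^ α) with hM
  set C : ℝ := Real.exp 1 * ((s + s ^ 2 / sb α s) * sD α) with hC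
  have hM0 : 0 ≤ M := integral_nonneg fun τ => (Real.exp_pos _).le
  have hC0 : 0 ≤ C := by
    have hb := sb_pos hα hs
    have : 0 ≤ sD α := integral_nonneg fun u => by positivity
    positivity
  have hI : Integrable (fun z : ℝ => ((1 : ℝ) + ‖z‖) ^ (-(1 + α))) :=
    integrable_one_add_norm (by simp; exact hα.1)
  refine (hI.const_mul ((M + C) * 2 ^ (1 + α))).mono' ?_ (Filter.Eventually.of_forall fun z => ?_)
  · have := sK_cont hα hs
    exact Continuous.aestronglyMeasurable (by fun_prop)
  have hp : 0 < ((1 : ℝ) + ‖z‖) ^ (-(1 + α)) := by positivity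
  rcases lt_or_ge z 0 with hz | hz
  · rw [sK_neg hα hs hz]; simp; positivity
  have h1 : ‖((Real.exp (-ξ * z) : ℝ) : ℂ) * sK α s 0 z‖ ≤ ‖sK α s 0 z‖ := by
    rw [norm_mul, Complex.norm_real, Real.norm_eq_abs, abs_of_pos (Real.exp_pos _)]
    have : Real.exp (-ξ * z) ≤ 1 := by rw [Real.exp_le_one_iff]; nlinarith
    exact mul_le_of_le_one_left (norm_nonneg _) this
  refine h1.trans ?_
  have hnz : ‖z‖ = z := by rw [Real.norm_eq_abs, abs_of_nonneg hz]
  have key : (2:ℝ) ^ (1 + α) * ((1 : ℝ) + ‖z‖) ^ (-(1 + α)) = ((1 + z) / 2) ^ (-(1 + α)) := by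
    rw [hnz, Real.div_rpow (by positivity) (by positivity), Real.rpow_neg (by positivity : (0:ℝ) ≤ 2)]
    field_simp
  rw [mul_assoc, key]
  rcases le_or_gt z 1 with h | h
  · have h2 := sK_norm hα hs le_rfl z
    rw [zero_mul, Real.exp_zero, one_mul, ← hM] at h2
    have h3 : 1 ≤ ((1 + z) / 2) ^ (-(1 + α)) :=
      Real.one_le_rpow_of_pos_of_le_one_of_nonpos (by positivity) (by linarith) (by linarith [hα.1])
    nlinarith
  · have h2 := sK_decay hα hs (by linarith : 0 < z)
    rw [← hC] at h2
    have h3 : z ^ (-(1 + α)) ≤ ((1 + z) / 2) ^ (-(1 + α)) :=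
      Real.rpow_le_rpow_of_nonpos (by positivity) (by linarith) (by linarith [hα.1])
    have h4 : 0 < z ^ (-(1 + α)) := by positivity
    nlinarith

lemma sK_integral {α s ξ : ℝ} (hα : α ∈ Set.Ioo (0 : ℝ) 1) (hs : 0 < s) (hξ : 0 ≤ ξ) :
    ∫ z : ℝ, ((Real.exp (-ξ * z) : ℝ) : ℂ) * sK α s 0 z = 2 * Real.pi * sG α s ξ := by
  let f : ℝ → ℂ := fun τ => sG α s ((ξ : ℂ) + τ * Complex.I)
  let F : ℝ → ℂ := fun z => ((Real.exp (-ξ * z) : ℝ) : ℂ) * sK α s 0 z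
  have hF : ∀ z, F z = ∫ τ : ℝ, Complex.exp (τ * Complex.I * z) * f τ := by
    intro z
    simp only [F]
    rw [← sK_shift hα hs hξ z, sK_eq, ← mul_assoc, ← Complex.ofReal_mul, ← Real.exp_add]
    simp [f]
  have hFI : Integrable F := sK_integrable hα hs hξ
  have hfour : FourierTransform.fourier f = fun v : ℝ => F ((-2 * Real.pi) * v) := by
    ext v
    rw [Real.fourier_real_eq_integral_exp_smul, hF]
    congr 1; ext τ
    rw [smul_eq_mul]
    congr 2
    push_cast; ring
  have hpi : (-2 * Real.pi) ≠ 0 := by simp [Real.pi_ne_zero]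
  have inv := MeasureTheory.Integrable.fourierInv_fourier_eq (f := f) (v := 0) (sG_line_int hα hs hξ)
    (by rw [hfour]; exact hFI.comp_mul_left' hpi) (sG_line_cont hα hξ).continuousAt
  rw [hfour, Real.fourierInv_eq'] at inv
  simp only [inner_zero_right, mul_zero, Complex.ofReal_zero, zero_mul, Complex.exp_zero, one_smul] at inv
  rw [Measure.integral_comp_mul_left F] at inv
  have : f 0 = sG α s ξ := by simp [f]
  rw [this] at inv
  rw [← inv]
  change ∫ z, F z = _
  have ha : |(-2 * Real.pi)⁻¹| = (2 * Real.pi)⁻¹ := by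
    rw [abs_inv, abs_mul, abs_of_pos Real.pi_pos]; norm_num
  rw [ha, Complex.real_smul]
  have : (Real.pi : ℂ) ≠ 0 := by exact_mod_cast Real.pi_ne_zero
  push_cast
  field_simp

/-- Laplace transform of the density of the stable subordinator:
`∫_ℝ e^{−ξz} h_α(z,s) dz = e^{−sξ^α}`. -/
theorem stmt15 (α s ξ : ℝ) (hα : α ∈ Set.Ioo (0 : ℝ) 1) (hs : 0 < s) (hξ : 0 ≤ ξ) :
    Integrable (fun z : ℝ => ((Real.exp (-ξ * z) : ℝ) : ℂ) * hstable α s z) ∧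
    ∫ z : ℝ, ((Real.exp (-ξ * z) : ℝ) : ℂ) * hstable α s z =
      ((Real.exp (-s * ξ ^ α) : ℝ) : ℂ) := by
  have e : (fun z : ℝ => ((Real.exp (-ξ * z) : ℝ) : ℂ) * hstable α s z) =
      fun z : ℝ => (((2 * Real.pi)⁻¹ : ℝ) : ℂ) * (((Real.exp (-ξ * z) : ℝ) : ℂ) * sK α s 0 z) := by
    ext z; rw [hstable_eq hα]; ring
  rw [e]
  refine ⟨(sK_integrable hα hs hξ).const_mul _, ?_⟩
  rw [integral_const_mul, sK_integral hα hs hξ, sG, ← Complex.ofReal_cpow hξ]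
  have : (Real.pi : ℂ) ≠ 0 := by exact_mod_cast Real.pi_ne_zero
  push_cast
  field_simp
end

section
/- Let α ∈ (0,1), μ > 0, β > 0, σ > 0. For h ∈ ℝ define Cov(h) := (σ²/Γ(β)²) ∫₀^∞ ∫₀^∞ s₁^{β−1} s₂^{β−1} e^{−μ(s₁+s₂)} (∫_ℝ h_α(z,s₁) h_α(z−h,s₂) dz) ds₁ ds₂. Then for every τ ∈ ℝ, the function h ↦ e^{iτh} Cov(h) is integrable on ℝ and ∫_ℝ e^{iτh} Cov(h) dh = σ² / (μ² + 2μ|τ|^α cos(πα/2) + |τ|^{2α})^β. -/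
open MeasureTheory Set Real

noncomputable def Wf (α : ℝ) (c : ℂ) (τ : ℝ) : ℂ := Complex.exp (-(c * ((τ ^ α : ℝ) : ℂ)))

lemma Wf_norm (α : ℝ) (c : ℂ) (τ : ℝ) : ‖Wf α c τ‖ = Real.exp (-c.re * τ ^ α) := by
  simp [Wf, Complex.norm_exp]

lemma Wf_int {α : ℝ} {c : ℂ} (hα : 0 < α) (hc : 0 < c.re) {p : ℝ} (hp : -1 < p) :
    IntegrableOn (fun τ => τ ^ p * ‖Wf α c τ‖) (Ioi 0) := by
  simp_rw [Wf_norm]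
  exact integrableOn_rpow_mul_exp_neg_mul_rpow hp hα hc

lemma Wf_meas (α : ℝ) (c : ℂ) : Measurable (Wf α c) := by
  unfold Wf; fun_prop

lemma Wf_deriv {α : ℝ} {c : ℂ} {τ : ℝ} (hτ : 0 < τ) :
    HasDerivAt (Wf α c) (-(c * ((α * τ ^ (α - 1) : ℝ) : ℂ)) * Wf α c τ) τ := by
  have h := (((Real.hasDerivAt_rpow_const (p := α) (Or.inl hτ.ne')).ofReal_comp).const_mul c).neg.cexp
  refine h.congr_deriv ?_
  simp only [Wf, Pi.neg_apply]; ring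

noncomputable def Wf' (α : ℝ) (c : ℂ) (τ : ℝ) : ℂ := -(c * ((α * τ ^ (α - 1) : ℝ) : ℂ)) * Wf α c τ

noncomputable def Wf'' (α : ℝ) (c : ℂ) (τ : ℝ) : ℂ :=
  -(c * ((α * ((α - 1) * τ ^ (α - 1 - 1)) : ℝ) : ℂ)) * Wf α c τ +
    -(c * ((α * τ ^ (α - 1) : ℝ) : ℂ)) * (-(c * ((α * τ ^ (α - 1) : ℝ) : ℂ)) * Wf α c τ)

lemma Wf'_deriv {α : ℝ} {c : ℂ} {τ : ℝ} (hτ : 0 < τ) :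
    HasDerivAt (Wf' α c) (Wf'' α c τ) τ := by
  have h := ((((Real.hasDerivAt_rpow_const (p := α - 1) (Or.inl hτ.ne')).const_mul α).ofReal_comp).const_mul c).neg
  exact h.mul (Wf_deriv hτ)

lemma Wf''_int {α : ℝ} {c : ℂ} (hα : 0 < α) (hc : 0 < c.re) :
    IntegrableOn (fun τ => τ ^ (1 - α / 2) * ‖Wf'' α c τ‖) (Ioi 0) := by
  have h1 := (Wf_int hα hc (p := α / 2 - 1) (by linarith)).const_mul (‖c‖ * (α * |α - 1|))
  have h2 := (Wf_int hα hc (p := α + α / 2 - 1) (by linarith)).const_mul (‖c‖ ^ 2 * α ^ 2)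
  refine (h1.add h2).mono' ?_ ?_
  · apply Measurable.aestronglyMeasurable
    have := Wf_meas α c
    unfold Wf''; fun_prop
  · filter_upwards [ae_restrict_mem measurableSet_Ioi] with τ hτ
    have hτ : 0 < τ := hτ
    rw [Real.norm_of_nonneg (by positivity)]
    have e1 : τ ^ (1 - α / 2) * τ ^ (α - 1 - 1) = τ ^ (α / 2 - 1) := by
      rw [← Real.rpow_add hτ]; ring_nf
    have e2 : τ ^ (1 - α / 2) * (τ ^ (α - 1) * τ ^ (α - 1)) = τ ^ (α + α / 2 - 1) := by
      rw [← Real.rpow_add hτ, ← Real.rpow_add hτ]; ring_nf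
    have : ‖Wf'' α c τ‖ ≤ ‖c‖ * (α * |α - 1|) * (τ ^ (α - 1 - 1) * ‖Wf α c τ‖)
        + ‖c‖ ^ 2 * α ^ 2 * ((τ ^ (α - 1) * τ ^ (α - 1)) * ‖Wf α c τ‖) := by
      unfold Wf''
      refine (norm_add_le _ _).trans (le_of_eq ?_)
      simp only [norm_mul, norm_neg, Complex.norm_real, Real.norm_eq_abs, abs_of_pos hα,
        abs_of_pos (Real.rpow_pos_of_pos hτ _)]
      ring
    refine (mul_le_mul_of_nonneg_left this (by positivity)).trans (le_of_eq ?_)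
    simp only [Pi.add_apply]
    rw [← e1, ← e2]; ring

noncomputable def Ef (z τ : ℝ) : ℂ := (Complex.exp (-(Complex.I * τ * z)) - 1) / (-(Complex.I * z))

lemma exp_bd (x : ℝ) {θ : ℝ} (h0 : 0 ≤ θ) (h1 : θ ≤ 1) :
    ‖Complex.exp (Complex.I * x) - 1‖ ≤ 2 * |x| ^ θ := by
  rcases le_total |x| 1 with h | h
  · calc _ ≤ |x| := Real.norm_exp_I_mul_ofReal_sub_one_le
      _ = |x| ^ (1:ℝ) := by simp
      _ ≤ |x| ^ θ := Real.rpow_le_rpow_of_exponent_ge' (abs_nonneg _) h h0 h1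
      _ ≤ _ := by linarith [Real.rpow_nonneg (abs_nonneg x) θ]
  · calc _ ≤ (1:ℝ) + 1 := by
          refine (norm_sub_le _ _).trans ?_
          rw [mul_comm Complex.I, Complex.norm_exp_ofReal_mul_I]; simp
      _ ≤ _ := by linarith [Real.one_le_rpow h h0]

lemma Ef_bd {z τ : ℝ} (hz : z ≠ 0) (hτ : 0 < τ) {θ : ℝ} (h0 : 0 ≤ θ) (h1 : θ ≤ 1) :
    ‖Ef z τ‖ ≤ 2 * |z| ^ (θ - 1) * τ ^ θ := by
  have h := exp_bd (-(τ * z)) h0 h1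
  have hz' : 0 < |z| := abs_pos.2 hz
  unfold Ef
  rw [norm_div, norm_neg, norm_mul, Complex.norm_I, one_mul, Complex.norm_real, Real.norm_eq_abs,
    div_le_iff₀ hz']
  rw [abs_neg, abs_mul, abs_of_pos hτ, Real.mul_rpow hτ.le hz'.le] at h
  have e : |z| ^ (θ - 1) * |z| = |z| ^ θ := by
    rw [Real.rpow_sub_one hz'.ne']; field_simp
  calc _ = ‖Complex.exp (Complex.I * ((-(τ * z) : ℝ) : ℂ)) - 1‖ := by
        congr 3; push_cast; ring
    _ ≤ _ := h
    _ = _ := by rw [← e]; ring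

lemma Ef_deriv {z : ℝ} (hz : z ≠ 0) (τ : ℝ) :
    HasDerivAt (Ef z) (Complex.exp (-(Complex.I * τ * z))) τ := by
  have h : HasDerivAt (fun τ : ℝ => -(Complex.I * (τ : ℂ) * z)) (-(Complex.I * 1 * z)) τ :=
    ((((hasDerivAt_id τ).ofReal_comp).const_mul Complex.I).mul_const (z : ℂ)).neg
  have hz' : (z : ℂ) ≠ 0 := by exact_mod_cast hz
  have h2 := (h.cexp.sub_const 1).div_const (-(Complex.I * z))
  refine h2.congr_deriv ?_
  field_simp

lemma exp_norm (τ z : ℝ) : ‖Complex.exp (-(Complex.I * τ * z))‖ = 1 := by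
  simp [Complex.norm_exp]

noncomputable def Gf (α : ℝ) (c : ℂ) (z : ℝ) : ℂ :=
  ∫ τ in Ioi (0:ℝ), Wf α c τ * Complex.exp (-(Complex.I * τ * z))

lemma Wf'_norm {α : ℝ} (hα : 0 < α) {c : ℂ} {τ : ℝ} (hτ : 0 < τ) :
    ‖Wf' α c τ‖ = ‖c‖ * α * (τ ^ (α - 1) * ‖Wf α c τ‖) := by
  simp only [Wf', norm_mul, norm_neg, Complex.norm_real, Real.norm_eq_abs, abs_of_pos hα,
        abs_of_pos (Real.rpow_pos_of_pos hτ _)]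
  ring

lemma Wf_le {α : ℝ} {c : ℂ} (hc : 0 < c.re) {τ : ℝ} (hτ : 0 < τ) : ‖Wf α c τ‖ ≤ 1 := by
  rw [Wf_norm, Real.exp_le_one_iff]
  have := Real.rpow_pos_of_pos hτ α
  nlinarith

lemma K_bd {α : ℝ} {c : ℂ} (hα : 0 < α) (hα1 : α < 1) (hc : 0 < c.re) {z : ℝ} (hz : z ≠ 0) :
    ‖∫ τ in Ioi (0:ℝ), Wf' α c τ * Complex.exp (-(Complex.I * τ * z))‖ ≤
      2 * |z| ^ (-(α / 2)) * ∫ τ in Ioi (0:ℝ), τ ^ (1 - α / 2) * ‖Wf'' α c τ‖ := by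
  have hm := Wf_meas α c
  have bd : ∀ τ ∈ Ioi (0:ℝ), ‖Wf'' α c τ * Ef z τ‖ ≤
      2 * |z| ^ (-(α / 2)) * (τ ^ (1 - α / 2) * ‖Wf'' α c τ‖) := by
    intro τ hτ
    have := Ef_bd hz hτ (θ := 1 - α / 2) (by linarith) (by linarith)
    rw [norm_mul]
    refine (mul_le_mul_of_nonneg_left this (norm_nonneg _)).trans (le_of_eq ?_)
    rw [show 1 - α / 2 - 1 = -(α / 2) by ring]; ring
  have hi := (Wf''_int hα hc).const_mul (2 * |z| ^ (-(α / 2)))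
  have hae := (ae_restrict_mem (μ := volume) measurableSet_Ioi).mono bd
  have hu : ∀ τ ∈ Ioi (0:ℝ), ‖Wf' α c τ * Ef z τ‖ ≤ ‖c‖ * α * τ ^ (α - 1) * ‖Ef z τ‖ := by
    intro τ hτ
    rw [norm_mul, Wf'_norm hα hτ]
    have := Wf_le (α := α) hc hτ
    have h0 : 0 < τ ^ (α - 1) := Real.rpow_pos_of_pos hτ _
    gcongr
    nlinarith
  have key := integral_Ioi_mul_deriv_eq_deriv_mul (a := 0) (a' := 0) (b' := 0) (u := Wf' α c) (v := Ef z)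
    (u' := Wf'' α c) (v' := fun τ : ℝ => Complex.exp (-(Complex.I * τ * z)))
    (fun x hx => Wf'_deriv hx) (fun x _ => Ef_deriv hz x) ?_ ?_ ?_ ?_
  · rw [key, sub_zero, zero_sub, norm_neg, ← integral_const_mul]
    exact norm_integral_le_of_norm_le hi hae
  · refine Integrable.mono' ((Wf_int hα hc (p := α - 1) (by linarith)).const_mul (‖c‖ * α)) ?_ ?_
    · apply Measurable.aestronglyMeasurable
      unfold Wf'; fun_prop
    · filter_upwards [ae_restrict_mem measurableSet_Ioi] with τ hτ
      rw [Pi.mul_apply, norm_mul, exp_norm, mul_one, Wf'_norm hα hτ]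
  · refine Integrable.mono' hi ?_ hae
    apply Measurable.aestronglyMeasurable
    unfold Wf'' Ef; fun_prop
  · have : Filter.Tendsto (fun τ : ℝ => 2 * ‖c‖ * α * τ ^ α) (nhdsWithin 0 (Ioi 0)) (nhds 0) := by
      have h := ((Real.continuousAt_rpow_const 0 α (Or.inr hα.le)).tendsto.const_mul (2 * ‖c‖ * α))
      rw [Real.zero_rpow hα.ne', mul_zero] at h
      exact h.mono_left nhdsWithin_le_nhds
    refine squeeze_zero_norm' ?_ this
    filter_upwards [self_mem_nhdsWithin] with τ hτ
    refine (hu τ hτ).trans ?_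
    have hE := Ef_bd hz hτ (θ := 1) (by norm_num) le_rfl
    simp only [sub_self, Real.rpow_zero, mul_one, Real.rpow_one] at hE
    have h0 : 0 < τ ^ (α - 1) := Real.rpow_pos_of_pos hτ _
    calc _ ≤ ‖c‖ * α * τ ^ (α - 1) * (2 * τ) := by gcongr
      _ = _ := by
        have : τ ^ α = τ ^ (α - 1) * τ := by
          rw [Real.rpow_sub_one (ne_of_gt hτ), div_mul_cancel₀ _ (ne_of_gt hτ)]
        rw [this]; ring
  · have : Filter.Tendsto (fun τ : ℝ => (‖c‖ * α * (2 * |z| ^ ((0:ℝ) - 1))) * τ ^ (-(1 - α))) Filter.atTop (nhds 0) := by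
      simpa using (tendsto_rpow_neg_atTop (y := 1 - α) (by linarith)).const_mul (‖c‖ * α * (2 * |z| ^ ((0:ℝ) - 1)))
    refine squeeze_zero_norm' ?_ this
    filter_upwards [Filter.eventually_gt_atTop 0] with τ hτ
    refine (hu τ hτ).trans ?_
    have hE := Ef_bd hz hτ (θ := 0) le_rfl (by norm_num)
    rw [Real.rpow_zero, mul_one] at hE
    have h0 : 0 < τ ^ (α - 1) := Real.rpow_pos_of_pos hτ _
    calc _ ≤ ‖c‖ * α * τ ^ (α - 1) * (2 * |z| ^ ((0:ℝ) - 1)) := by gcongr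
      _ = _ := by rw [neg_sub]; ring

lemma G_eq {α : ℝ} {c : ℂ} (hα : 0 < α) (hc : 0 < c.re) {z : ℝ} (hz : z ≠ 0) :
    Gf α c z = 1 / (Complex.I * z) + 1 / (Complex.I * z) *
      ∫ τ in Ioi (0:ℝ), Wf' α c τ * Complex.exp (-(Complex.I * τ * z)) := by
  have hm := Wf_meas α c
  have hz' : (z : ℂ) ≠ 0 := by exact_mod_cast hz
  have key := integral_Ioi_mul_deriv_eq_deriv_mul (a := 0) (a' := 1 / (-(Complex.I * z))) (b' := 0)
    (u := Wf α c) (v := fun τ : ℝ => Complex.exp (-(Complex.I * τ * z)) / (-(Complex.I * z)))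
    (u' := Wf' α c) (v' := fun τ : ℝ => Complex.exp (-(Complex.I * τ * z)))
    (fun x hx => Wf_deriv hx) (fun x _ => ?_) ?_ ?_ ?_ ?_
  · rw [Gf, key]
    simp_rw [← mul_div_assoc]
    rw [integral_div]
    field_simp
    ring
  · have h := (Ef_deriv hz x).add_const (1 / (-(Complex.I * z)))
    refine h.congr_of_eventuallyEq (Filter.Eventually.of_forall fun y => ?_)
    simp only [Ef]; field_simp; ring
  · refine Integrable.mono' (Wf_int hα hc (p := 0) (by linarith)) ?_ ?_
    · apply Measurable.aestronglyMeasurable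
      fun_prop
    · filter_upwards [ae_restrict_mem measurableSet_Ioi] with τ hτ
      rw [Pi.mul_apply, norm_mul, exp_norm]; simp
  · refine Integrable.mono' ((Wf_int hα hc (p := α - 1) (by linarith)).const_mul (‖c‖ * α / |z|)) ?_ ?_
    · apply Measurable.aestronglyMeasurable
      unfold Wf'; fun_prop
    · filter_upwards [ae_restrict_mem measurableSet_Ioi] with τ hτ
      rw [Pi.mul_apply, norm_mul, norm_div, exp_norm, Wf'_norm hα hτ]
      simp only [norm_neg, norm_mul, Complex.norm_I, one_mul, Complex.norm_real, Real.norm_eq_abs]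
      apply le_of_eq; ring
  · have : ContinuousAt (Wf α c * fun τ : ℝ => Complex.exp (-(Complex.I * τ * z)) / (-(Complex.I * z))) 0 := by
      refine ContinuousAt.mul ?_ (by fun_prop)
      unfold Wf
      have := (Real.continuousAt_rpow_const 0 α (Or.inr hα.le))
      fun_prop
    have h := this.tendsto
    simp only [Pi.mul_apply, Wf, Real.zero_rpow hα.ne'] at h
    simp only [Complex.ofReal_zero, mul_zero, neg_zero, Complex.exp_zero, zero_mul, one_mul] at h
    exact h.mono_left nhdsWithin_le_nhds
  · have : Filter.Tendsto (fun τ : ℝ => Real.exp (-(c.re * τ ^ α)) * |z|⁻¹) Filter.atTop (nhds 0) := by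
      have h := (Real.tendsto_exp_neg_atTop_nhds_zero.comp ((tendsto_rpow_atTop hα).const_mul_atTop hc)).mul_const (|z|⁻¹)
      simpa using h
    refine squeeze_zero_norm (fun τ => ?_) this
    rw [Pi.mul_apply, norm_mul, norm_div, exp_norm, Wf_norm]
    simp

lemma G_bd {α : ℝ} {c : ℂ} (hα : 0 < α) (hα1 : α < 1) (hc : 0 < c.re) :
    ∃ C : ℝ, 0 ≤ C ∧ ∀ z : ℝ, z ≠ 0 → ‖Gf α c z - 1 / (Complex.I * z)‖ ≤ C * |z| ^ (-(1 + α / 2)) := by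
  refine ⟨2 * ∫ τ in Ioi (0:ℝ), τ ^ (1 - α / 2) * ‖Wf'' α c τ‖, ?_, fun z hz => ?_⟩
  · refine mul_nonneg (by norm_num) (setIntegral_nonneg measurableSet_Ioi fun τ hτ => ?_)
    have : (0:ℝ) < τ := hτ
    positivity
  · have hz' : 0 < |z| := abs_pos.2 hz
    rw [G_eq hα hc hz, add_sub_cancel_left, norm_mul, norm_div, norm_mul]
    simp only [Complex.norm_I, norm_one, one_mul, Complex.norm_real, Real.norm_eq_abs]
    refine (mul_le_mul_of_nonneg_left (K_bd hα hα1 hc hz) (by positivity)).trans (le_of_eq ?_)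
    rw [neg_add, add_comm (-1 : ℝ), ← sub_eq_add_neg, Real.rpow_sub_one hz'.ne']
    field_simp

noncomputable def lam (α τ : ℝ) : ℂ := ((|τ| ^ α : ℝ) : ℂ) *
        Complex.exp (-(Complex.I * ((Real.pi * α * Real.sign τ / 2 : ℝ) : ℂ)))

noncomputable def cp (α : ℝ) : ℂ := Complex.exp (-(Complex.I * ((Real.pi * α / 2 : ℝ) : ℂ)))
noncomputable def cm (α : ℝ) : ℂ := Complex.exp ((Complex.I * ((Real.pi * α / 2 : ℝ) : ℂ)))

lemma cos_pos' {α : ℝ} (hα : 0 < α) (hα1 : α < 1) : 0 < Real.cos (Real.pi * α / 2) := by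
  have := Real.pi_pos
  apply Real.cos_pos_of_mem_Ioo
  constructor <;> nlinarith

lemma cp_re (α : ℝ) : (cp α).re = Real.cos (Real.pi * α / 2) := by
  rw [cp, Complex.exp_re]; simp

lemma cm_re (α : ℝ) : (cm α).re = Real.cos (Real.pi * α / 2) := by
  rw [cm, Complex.exp_re]; simp

lemma lam_pos {α τ : ℝ} (h : 0 < τ) : lam α τ = cp α * ((τ ^ α : ℝ) : ℂ) := by
  rw [lam, Real.sign_of_pos h, abs_of_pos h, cp]; simp [mul_comm]

lemma lam_neg {α τ : ℝ} (h : 0 < τ) : lam α (-τ) = cm α * ((τ ^ α : ℝ) : ℂ) := by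
  rw [lam, Real.sign_of_neg (by linarith), abs_neg, abs_of_pos h, cm, mul_comm]
  congr 2; push_cast; ring

lemma lam_zero {α : ℝ} (h : 0 < α) : lam α 0 = 0 := by
  simp [lam, Real.zero_rpow h.ne']

lemma lam_cont {α : ℝ} (hα : 0 < α) : Continuous (lam α) := by
  have : lam α = fun τ => if (0:ℝ) ≤ τ then cp α * ((|τ| ^ α : ℝ) : ℂ) else cm α * ((|τ| ^ α : ℝ) : ℂ) := by
    ext τ
    rcases lt_trichotomy τ 0 with h | h | h
    · have h2 := lam_neg (α := α) (τ := -τ) (by linarith)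
      rw [if_neg (not_le.2 h), abs_of_neg h, ← h2, neg_neg]
    · subst h; simp [lam_zero hα, Real.zero_rpow hα.ne']
    · rw [if_pos h.le, abs_of_pos h, lam_pos h]
  rw [this]
  have hc : Continuous fun τ : ℝ => |τ| ^ α := continuous_abs.rpow_const (fun _ => Or.inr hα.le)
  refine Continuous.if_le (by fun_prop) (by fun_prop) continuous_const continuous_id ?_
  intro τ h
  rw [← h]; simp [Real.zero_rpow hα.ne']

lemma lam_re (α τ : ℝ) : (lam α τ).re = |τ| ^ α * Real.cos (Real.pi * α * Real.sign τ / 2) := by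
  rw [lam, Complex.re_ofReal_mul, Complex.exp_re]; simp

lemma lam_re' {α : ℝ} (hα : 0 < α) (τ : ℝ) : (lam α τ).re = |τ| ^ α * Real.cos (Real.pi * α / 2) := by
  rw [lam_re]
  rcases Real.sign_apply_eq τ with h | h | h <;> rw [h]
  · rw [← Real.cos_neg]; ring_nf
  · rw [Real.sign_eq_zero_iff] at h; subst h; simp [Real.zero_rpow hα.ne']
  · ring_nf

lemma lam_scale {α : ℝ} (hα : 0 < α) {s : ℝ} (hs : 0 < s) (τ : ℝ) :
    lam α (s ^ (α⁻¹) * τ) = s * lam α τ := by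
  have h1 : 0 < s ^ (α⁻¹) := Real.rpow_pos_of_pos hs _
  have h2 : Real.sign (s ^ (α⁻¹) * τ) = Real.sign τ := by
    rcases lt_trichotomy τ 0 with h | h | h
    · rw [Real.sign_of_neg h, Real.sign_of_neg (mul_neg_of_pos_of_neg h1 h)]
    · subst h; simp
    · rw [Real.sign_of_pos h, Real.sign_of_pos (mul_pos h1 h)]
  rw [lam, h2, abs_mul, abs_of_pos h1, Real.mul_rpow h1.le (abs_nonneg _), ← Real.rpow_mul hs.le,
    inv_mul_cancel₀ hα.ne', Real.rpow_one, lam]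
  push_cast; ring

noncomputable def phi (α τ : ℝ) : ℂ := Complex.exp (-lam α τ)

lemma phi_cont {α : ℝ} (hα : 0 < α) : Continuous (phi α) := by
  have := lam_cont hα
  unfold phi; fun_prop

lemma phi_pos {α τ : ℝ} (h : 0 < τ) : phi α τ = Wf α (cp α) τ := by
  rw [phi, lam_pos h, Wf]

lemma phi_neg {α τ : ℝ} (h : 0 < τ) : phi α (-τ) = Wf α (cm α) τ := by
  rw [phi, lam_neg h, Wf]

lemma phi_intOn_pos {α : ℝ} (hα : 0 < α) (hα1 : α < 1) : IntegrableOn (phi α) (Ioi 0) := by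
  refine Integrable.mono' (Wf_int hα (c := cp α) (by rw [cp_re]; exact cos_pos' hα hα1) (p := 0) (by norm_num)) 
    (phi_cont hα).aestronglyMeasurable ?_
  filter_upwards [ae_restrict_mem measurableSet_Ioi] with τ hτ
  rw [phi_pos hτ]; simp

lemma phi_intOn_neg {α : ℝ} (hα : 0 < α) (hα1 : α < 1) : IntegrableOn (fun τ => phi α (-τ)) (Ioi 0) := by
  refine Integrable.mono' (Wf_int hα (c := cm α) (by rw [cm_re]; exact cos_pos' hα hα1) (p := 0) (by norm_num)) 
    ((phi_cont hα).comp continuous_neg).aestronglyMeasurable ?_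
  filter_upwards [ae_restrict_mem measurableSet_Ioi] with τ hτ
  rw [phi_neg hτ]; simp

lemma phi_int {α : ℝ} (hα : 0 < α) (hα1 : α < 1) : Integrable (phi α) := by
  rw [← integrableOn_univ, ← Iic_union_Ioi (a := (0:ℝ))]
  refine IntegrableOn.union ?_ (phi_intOn_pos hα hα1)
  have h := phi_intOn_neg hα hα1
  have := (integrableOn_Iic_iff_integrableOn_Iio (f := phi α) (b := 0) (μ := volume)).2
  apply this
  have h2 := (MeasurePreserving.integrableOn_comp_preimage (Measure.measurePreserving_neg (volume : Measure ℝ))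
    (Homeomorph.neg ℝ).measurableEmbedding (f := phi α) (s := Iio 0)).1
  apply h2
  simpa [Function.comp_def] using h

lemma exp_phi_int {α : ℝ} (hα : 0 < α) (hα1 : α < 1) (z : ℝ) :
    Integrable (fun τ : ℝ => Complex.exp (-(Complex.I * τ * z)) * phi α τ) := by
  refine (phi_int hα hα1).norm.mono' ?_ ?_
  · have := phi_cont hα
    apply Continuous.aestronglyMeasurable; fun_prop
  · filter_upwards with τ
    rw [norm_mul, exp_norm, one_mul]

lemma hst_one (α z : ℝ) : hstable α 1 z =
    ((2 * Real.pi)⁻¹ : ℝ) * ∫ τ : ℝ, Complex.exp (-(Complex.I * τ * z)) * phi α τ := by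
  rw [hstable]
  congr 2; ext τ
  rw [phi, ← Complex.exp_add, lam, one_mul, sub_eq_add_neg]

lemma hst_scale {α : ℝ} (hα : 0 < α) {s : ℝ} (hs : 0 < s) (z : ℝ) :
    hstable α s z = ((s ^ (-α⁻¹) : ℝ) : ℂ) * hstable α 1 (s ^ (-α⁻¹) * z) := by
  have h1 : 0 < s ^ (α⁻¹) := Real.rpow_pos_of_pos hs _
  have e : (s ^ (-α⁻¹)) = (s ^ (α⁻¹))⁻¹ := Real.rpow_neg hs.le _
  have key := Measure.integral_comp_mul_left
    (fun τ : ℝ => Complex.exp (-(Complex.I * τ * ((s ^ (-α⁻¹) * z : ℝ) : ℂ))) * phi α τ) (s ^ (α⁻¹))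
  rw [abs_of_pos (inv_pos.2 h1), ← e, Complex.real_smul] at key
  rw [hst_one, mul_left_comm, ← key, hstable]
  congr 2; ext τ
  rw [phi, ← Complex.exp_add, lam_scale hα hs, lam, e]
  congr 1
  have : ((s ^ α⁻¹ : ℝ) : ℂ) ≠ 0 := by exact_mod_cast h1.ne'
  have h3 : Complex.I * (((s ^ α⁻¹ : ℝ) : ℂ) * τ) * (((s ^ α⁻¹ : ℝ) : ℂ)⁻¹ * z) = Complex.I * τ * z := by
    generalize ((s ^ α⁻¹ : ℝ) : ℂ) = A at *
    field_simp
  push_cast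
  rw [h3]
  ring

lemma hst_bd {α : ℝ} (z : ℝ) :
    ‖hstable α 1 z‖ ≤ (2 * Real.pi)⁻¹ * ∫ τ, ‖phi α τ‖ := by
  rw [hst_one, norm_mul, Complex.norm_real, Real.norm_of_nonneg (by positivity)]
  gcongr
  refine (norm_integral_le_integral_norm _).trans (le_of_eq ?_)
  congr 1; ext τ
  rw [norm_mul, exp_norm, one_mul]

lemma hst_split {α : ℝ} (hα : 0 < α) (hα1 : α < 1) (z : ℝ) :
    hstable α 1 z = ((2 * Real.pi)⁻¹ : ℝ) * (Gf α (cm α) (-z) + Gf α (cp α) z) := by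
  rw [hst_one]
  have h := exp_phi_int hα hα1 z
  rw [← intervalIntegral.integral_Iic_add_Ioi (b := 0) h.integrableOn h.integrableOn]
  congr 2
  · have := integral_comp_neg_Ioi 0 (fun τ : ℝ => Complex.exp (-(Complex.I * τ * z)) * phi α τ)
    rw [neg_zero] at this
    rw [← this, Gf]
    refine setIntegral_congr_fun measurableSet_Ioi fun τ hτ => ?_
    simp only [phi_neg hτ]
    rw [mul_comm]; push_cast; ring_nf
  · rw [Gf]
    refine setIntegral_congr_fun measurableSet_Ioi fun τ hτ => ?_
    simp only [phi_pos hτ]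
    rw [mul_comm]

lemma hst_decay {α : ℝ} (hα : 0 < α) (hα1 : α < 1) :
    ∃ C : ℝ, 0 ≤ C ∧ ∀ z : ℝ, z ≠ 0 → ‖hstable α 1 z‖ ≤ C * |z| ^ (-(1 + α / 2)) := by
  obtain ⟨C1, h1, H1⟩ := G_bd hα hα1 (c := cm α) (by rw [cm_re]; exact cos_pos' hα hα1)
  obtain ⟨C2, h2, H2⟩ := G_bd hα hα1 (c := cp α) (by rw [cp_re]; exact cos_pos' hα hα1)
  refine ⟨(2 * Real.pi)⁻¹ * (C1 + C2), by positivity, fun z hz => ?_⟩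
  rw [hst_split hα hα1, norm_mul, Complex.norm_real, Real.norm_of_nonneg (by positivity), mul_assoc]
  gcongr
  have hz' : (z : ℂ) ≠ 0 := by exact_mod_cast hz
  have e : Gf α (cm α) (-z) + Gf α (cp α) z = (Gf α (cm α) (-z) - 1 / (Complex.I * ((-z : ℝ) : ℂ)))
    + (Gf α (cp α) z - 1 / (Complex.I * z)) := by
    push_cast; field_simp; ring
  rw [e, add_mul]
  refine (norm_add_le _ _).trans (add_le_add ?_ (H2 z hz))
  simpa using H1 (-z) (neg_ne_zero.2 hz)

open FourierTransform in
lemma hst_fourier (α z : ℝ) : hstable α 1 z = ((2 * Real.pi)⁻¹ : ℝ) * 𝓕 (phi α) ((2 * Real.pi)⁻¹ * z) := by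
  rw [hst_one, Real.fourier_real_eq_integral_exp_smul]
  congr 2; ext τ
  rw [smul_eq_mul]
  congr 2
  have : (Real.pi : ℂ) ≠ 0 := by exact_mod_cast Real.pi_ne_zero
  push_cast; field_simp

lemma hst_cont {α : ℝ} (hα : 0 < α) (hα1 : α < 1) : Continuous (hstable α 1) := by
  have h : Continuous (FourierTransform.fourier (phi α)) :=
    VectorFourier.fourierIntegral_continuous Real.continuous_fourierChar
      (by apply continuous_inner) (phi_int hα hα1)
  have : hstable α 1 = fun z => ((2 * Real.pi)⁻¹ : ℝ) * FourierTransform.fourier (phi α) ((2 * Real.pi)⁻¹ * z) := by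
    ext z; exact hst_fourier α z
  rw [this]; fun_prop

lemma hst_int {α : ℝ} (hα : 0 < α) (hα1 : α < 1) : Integrable (hstable α 1) := by
  obtain ⟨C, h0, H⟩ := hst_decay hα hα1
  set M := (2 * Real.pi)⁻¹ * ∫ τ, ‖phi α τ‖
  have hM : 0 ≤ M := (norm_nonneg _).trans (hst_bd (α := α) 0)
  have hi := (integrable_one_add_norm (E := ℝ) (μ := volume) (r := 1 + α / 2) (by simp; linarith)).const_mul
    ((M + C) * 2 ^ (1 + α / 2))
  refine hi.mono' (hst_cont hα hα1).aestronglyMeasurable ?_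
  filter_upwards with z
  rw [mul_assoc, Real.norm_eq_abs]
  have hp : 0 < 1 + α / 2 := by linarith
  have e : (2:ℝ) ^ (1 + α / 2) * (1 + |z|) ^ (-(1 + α / 2)) = ((1 + |z|) / 2) ^ (-(1 + α / 2)) := by
    rw [Real.div_rpow (by positivity) (by norm_num), Real.rpow_neg (by norm_num : (0:ℝ) ≤ 2), div_inv_eq_mul, mul_comm]
  rw [e]
  have hx : 0 < (1 + |z|) / 2 := by positivity
  rcases le_total |z| 1 with h | h
  · have : 1 ≤ ((1 + |z|) / 2) ^ (-(1 + α / 2)) :=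
      Real.one_le_rpow_of_pos_of_le_one_of_nonpos hx (by linarith) (by linarith)
    have := hst_bd (α := α) z
    nlinarith
  · have hz : z ≠ 0 := by rintro rfl; simp at h; linarith
    have h1 : |z| ^ (-(1 + α / 2)) ≤ ((1 + |z|) / 2) ^ (-(1 + α / 2)) :=
      Real.rpow_le_rpow_of_nonpos hx (by linarith) (by linarith)
    have h2 := H z hz
    have h3 : 0 < |z| ^ (-(1 + α / 2)) := Real.rpow_pos_of_pos (by linarith) _
    nlinarith [mul_le_mul_of_nonneg_left h1 h0, mul_nonneg hM (h3.le.trans h1)]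

lemma hst_inv {α : ℝ} (hα : 0 < α) (hα1 : α < 1) (τ : ℝ) :
    ∫ z : ℝ, Complex.exp (Complex.I * τ * z) * hstable α 1 z = phi α τ := by
  have hpi : (2 * Real.pi) ≠ 0 := by positivity
  have hF : Integrable (FourierTransform.fourier (phi α)) := by
    have h := ((hst_int hα hα1).comp_mul_left' hpi).const_mul ((2 * Real.pi : ℝ) : ℂ)
    refine h.congr (Filter.Eventually.of_forall fun z => ?_)
    simp only [hst_fourier]
    rw [← mul_assoc, ← mul_assoc, ← Complex.ofReal_mul, mul_inv_cancel₀ hpi, inv_mul_cancel₀ hpi]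
    simp
  have h := congrFun (Continuous.fourierInv_fourier_eq (phi_cont hα) (phi_int hα hα1) hF) τ
  rw [Real.fourierInv_eq'] at h
  rw [← h]
  have key := Measure.integral_comp_mul_left (fun z : ℝ => Complex.exp (((2 * Real.pi * (z * τ) : ℝ) : ℂ) * Complex.I) *
    FourierTransform.fourier (phi α) z) ((2 * Real.pi)⁻¹)
  rw [inv_inv, abs_of_pos (by positivity)] at key
  have e : ∫ z : ℝ, Complex.exp (Complex.I * τ * z) * hstable α 1 z = ((2 * Real.pi)⁻¹ : ℝ) *
     ∫ x : ℝ, Complex.exp (((2 * Real.pi * ((2 * Real.pi)⁻¹ * x * τ) : ℝ) : ℂ) * Complex.I) *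
    FourierTransform.fourier (phi α) ((2 * Real.pi)⁻¹ * x) := by
    rw [← integral_const_mul]
    congr 1; ext z
    rw [hst_fourier, mul_left_comm]
    congr 3
    have : (Real.pi : ℂ) ≠ 0 := by exact_mod_cast Real.pi_ne_zero
    push_cast; field_simp
  rw [e, key, Complex.real_smul, ← mul_assoc, ← Complex.ofReal_mul, inv_mul_cancel₀ hpi]
  simp [mul_comm]

lemma gamma_int {β : ℝ} (hβ : 0 < β) {x : ℝ} (hx : 0 < x) :
    IntegrableOn (fun s : ℝ => s ^ (β - 1) * Real.exp (-x * s)) (Ioi 0) := by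
  have := integrableOn_rpow_mul_exp_neg_mul_rpow (s := β - 1) (p := 1) (b := x) (by linarith) one_pos hx
  simpa using this

lemma gamma_complex {β : ℝ} (hβ : 0 < β) {r : ℂ} (hr : 0 < r.re) :
    ∫ s in Ioi (0:ℝ), ((s ^ (β - 1) : ℝ) : ℂ) * Complex.exp (-(r * s)) =
      (1 / r) ^ (β : ℂ) * (Real.Gamma β : ℂ) := by
  set m : Measure ℝ := (volume.restrict (Ioi (0:ℝ))).withDensity
    (fun s => ((Real.toNNReal (s ^ (β - 1)) : NNReal) : ENNReal)) with hm
  have hmeas : Measurable (fun s : ℝ => Real.toNNReal (s ^ (β - 1))) := by fun_prop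
  have hE : ∀ z : ℂ, ProbabilityTheory.complexMGF id m z =
      ∫ s in Ioi (0:ℝ), ((s ^ (β - 1) : ℝ) : ℂ) * Complex.exp (z * s) := by
    intro z
    rw [ProbabilityTheory.complexMGF, hm, integral_withDensity_eq_integral_smul hmeas]
    refine setIntegral_congr_fun measurableSet_Ioi fun s hs => ?_
    have : 0 ≤ s ^ (β - 1) := Real.rpow_nonneg (le_of_lt hs) _
    simp [NNReal.smul_def, this]
  have hset : Iio (0:ℝ) ⊆ ProbabilityTheory.integrableExpSet id m := by
    intro x hx
    have hx : x < 0 := hx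
    rw [ProbabilityTheory.integrableExpSet, mem_ofPred_eq, hm,
      integrable_withDensity_iff_integrable_smul hmeas]
    refine (gamma_int hβ (x := -x) (by linarith)).congr ?_
    filter_upwards [ae_restrict_mem measurableSet_Ioi] with s hs
    have : 0 ≤ s ^ (β - 1) := Real.rpow_nonneg (le_of_lt hs) _
    simp [NNReal.smul_def, this]
  have hint : ∀ z : ℂ, z.re < 0 → z.re ∈ interior (ProbabilityTheory.integrableExpSet id m) :=
    fun z hz => interior_maximal hset isOpen_Iio hz
  have hU : IsOpen {z : ℂ | z.re < 0} := isOpen_lt Complex.continuous_re continuous_const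
  have hA : AnalyticOnNhd ℂ (ProbabilityTheory.complexMGF id m) {z : ℂ | z.re < 0} :=
    fun z hz => ProbabilityTheory.analyticAt_complexMGF (hint z hz)
  have hB : AnalyticOnNhd ℂ (fun z : ℂ => (1 / (-z)) ^ (β : ℂ) * (Real.Gamma β : ℂ)) {z : ℂ | z.re < 0} := by
    refine DifferentiableOn.analyticOnNhd ?_ hU
    intro z hz
    have hz : z.re < 0 := hz
    have hz0 : -z ≠ 0 := by
      intro h; rw [neg_eq_zero] at h; rw [h] at hz; simp at hz
    have hs : 1 / (-z) ∈ Complex.slitPlane := by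
      left
      rw [one_div, Complex.inv_re]
      refine div_pos (by simpa using hz) (Complex.normSq_pos.2 hz0)
    refine DifferentiableAt.differentiableWithinAt ?_
    have hd : DifferentiableAt ℂ (fun z : ℂ => 1 / (-z)) z :=
      (differentiableAt_const _).div differentiableAt_id.neg hz0
    exact (hd.cpow_const hs).mul_const _
  have hreal : ∀ x : ℝ, x < 0 → ProbabilityTheory.complexMGF id m x =
      (1 / (-(x:ℂ))) ^ (β : ℂ) * (Real.Gamma β : ℂ) := by
    intro x hx
    rw [hE]
    have h := Complex.integral_cpow_mul_exp_neg_mul_Ioi (a := β) (r := -x) (by simpa using hβ) (by linarith)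
    rw [Complex.Gamma_ofReal] at h
    push_cast at h
    rw [← h]
    refine setIntegral_congr_fun measurableSet_Ioi fun s hs => ?_
    rw [Complex.ofReal_cpow (le_of_lt hs)]
    push_cast; ring_nf
  have key := AnalyticOnNhd.eqOn_of_preconnected_of_frequently_eq hA hB
    ((convex_halfSpace_re_lt 0).isPreconnected) (z₀ := ((-1 : ℝ) : ℂ)) (by simp) ?_
  · have := key (x := -r) (by simpa using hr)
    rw [hE] at this
    simpa using this
  · have : Filter.Tendsto (fun x : ℝ => (x : ℂ)) (nhdsWithin (-1) {-1}ᶜ) (nhdsWithin ((-1 : ℝ) : ℂ) {((-1:ℝ):ℂ)}ᶜ) := by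
      refine tendsto_nhdsWithin_of_tendsto_nhds_of_eventually_within _
        (Complex.continuous_ofReal.continuousAt.tendsto.mono_left nhdsWithin_le_nhds) ?_
      filter_upwards [self_mem_nhdsWithin] with x hx
      simpa using (show x ≠ -1 from hx) |> fun h => (by exact_mod_cast h : (x:ℂ) ≠ ((-1:ℝ):ℂ))
    refine this.frequently (Filter.Eventually.frequently ?_)
    have h0 : ∀ᶠ x : ℝ in nhdsWithin (-1) {-1}ᶜ, x < 0 :=
      (eventually_lt_nhds (by norm_num)).filter_mono nhdsWithin_le_nhds
    filter_upwards [h0] with x hx using hreal x hx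

lemma gamma_prod {β : ℝ} {r : ℂ} (hr : 0 < r.re) :
    (1 / r) ^ (β : ℂ) * (1 / (starRingEnd ℂ r)) ^ (β : ℂ) = ((1 / (Complex.normSq r) ^ β : ℝ) : ℂ) := by
  have hr0 : r ≠ 0 := by intro h; rw [h] at hr; simp at hr
  have harg : (1 / r).arg ≠ π := by
    rw [one_div]
    have : (r⁻¹) ∈ Complex.slitPlane := by
      left; rw [Complex.inv_re]; exact div_pos hr (Complex.normSq_pos.2 hr0)
    exact Complex.slitPlane_arg_ne_pi this
  have h := Complex.conj_cpow (1 / r) (β : ℂ) harg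
  rw [Complex.conj_ofReal, map_div₀, map_one] at h
  rw [h, Complex.mul_conj, Complex.normSq_eq_norm_sq, Complex.norm_cpow_real]
  congr 1
  rw [norm_div, norm_one, Complex.normSq_eq_norm_sq, Real.div_rpow zero_le_one (norm_nonneg _),
    Real.one_rpow, div_pow, one_pow, ← Real.rpow_natCast, ← Real.rpow_natCast, ← Real.rpow_mul (norm_nonneg _),
     ← Real.rpow_mul (norm_nonneg _), mul_comm]

noncomputable def qf (α s z : ℝ) : ℂ := ((s ^ (-α⁻¹) : ℝ) : ℂ) * hstable α 1 (s ^ (-α⁻¹) * z)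

lemma qf_meas {α : ℝ} (hα : 0 < α) (hα1 : α < 1) : Measurable (fun p : ℝ × ℝ => qf α p.1 p.2) := by
  have := (hst_cont hα hα1).measurable
  unfold qf
  refine Measurable.mul (by fun_prop) (this.comp (by fun_prop))

lemma qf_int {α : ℝ} (hα : 0 < α) (hα1 : α < 1) {s : ℝ} (hs : 0 < s) : Integrable (qf α s) :=
  ((hst_int hα hα1).comp_mul_left' (Real.rpow_pos_of_pos hs _).ne').const_mul _

lemma qf_norm {α : ℝ} {s : ℝ} (hs : 0 < s) :
    ∫ z, ‖qf α s z‖ = ∫ z, ‖hstable α 1 z‖ := by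
  have h0 : 0 < s ^ (-α⁻¹) := Real.rpow_pos_of_pos hs _
  have := Measure.integral_comp_mul_left (fun z => ‖hstable α 1 z‖) (s ^ (-α⁻¹))
  simp only [qf, norm_mul, Complex.norm_real, Real.norm_of_nonneg h0.le]
  rw [integral_const_mul, this, smul_eq_mul, abs_of_pos (inv_pos.2 h0), ← mul_assoc, mul_inv_cancel₀ h0.ne', one_mul]

lemma qf_ft {α : ℝ} (hα : 0 < α) (hα1 : α < 1) {s : ℝ} (hs : 0 < s) (τ : ℝ) :
    ∫ z : ℝ, Complex.exp (Complex.I * τ * z) * qf α s z = Complex.exp (-(s * lam α τ)) := by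
  have h0 : 0 < s ^ (-α⁻¹) := Real.rpow_pos_of_pos hs _
  have h1 : 0 < s ^ (α⁻¹) := Real.rpow_pos_of_pos hs _
  have e : (s ^ (α⁻¹)) * s ^ (-α⁻¹) = 1 := by rw [← Real.rpow_add hs]; simp
  have key := Measure.integral_comp_mul_left (fun z : ℝ =>
    Complex.exp (Complex.I * ((s ^ (α⁻¹) * τ : ℝ) : ℂ) * z) * hstable α 1 z) (s ^ (-α⁻¹))
  rw [hst_inv hα hα1, phi, lam_scale hα hs, abs_of_pos (inv_pos.2 h0)] at key
  have e2 : ∀ z : ℝ, Complex.exp (Complex.I * τ * z) * qf α s z = ((s ^ (-α⁻¹) : ℝ) : ℂ) *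
    (Complex.exp (Complex.I * ((s ^ (α⁻¹) * τ : ℝ) : ℂ) * ((s ^ (-α⁻¹) * z : ℝ) : ℂ)) * hstable α 1 (s ^ (-α⁻¹) * z)) := by
    intro z
    have : Complex.I * ((s ^ (α⁻¹) * τ : ℝ) : ℂ) * ((s ^ (-α⁻¹) * z : ℝ) : ℂ) = Complex.I * τ * z := by
      rw [mul_assoc, ← Complex.ofReal_mul, show s ^ (α⁻¹) * τ * (s ^ (-α⁻¹) * z) = (s ^ (α⁻¹) * s ^ (-α⁻¹)) * (τ * z) by ring, e, one_mul]
      push_cast; ring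
    rw [this, qf]; ring
  simp_rw [e2]
  rw [integral_const_mul, key, Complex.real_smul, ← mul_assoc, ← Complex.ofReal_mul, mul_inv_cancel₀ h0.ne']
  simp

lemma cross_integrand {f g : ℝ → ℂ} (hf : Integrable f) (hg : Integrable g) :
    Integrable (fun p : ℝ × ℝ => f p.2 * g (p.2 - p.1)) (volume.prod volume) := by
  have := hf.convolution_integrand (ContinuousLinearMap.mul ℂ ℂ) hg.comp_neg (μ := volume)
  simpa using this

lemma exp_int {f : ℝ → ℂ} (hf : Integrable f) (τ : ℝ) :
    Integrable (fun z : ℝ => Complex.exp (Complex.I * τ * z) * f z) := by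
  refine hf.norm.mono' ?_ ?_
  · exact (Continuous.aestronglyMeasurable (by fun_prop)).mul hf.aestronglyMeasurable
  · filter_upwards with z
    rw [norm_mul, Complex.norm_exp]; simp

lemma cross_norm {f g : ℝ → ℂ} (hf : Integrable f) (hg : Integrable g) :
    ∫ h, ‖∫ z, f z * g (z - h)‖ ≤ (∫ z, ‖f z‖) * ∫ z, ‖g z‖ := by
  have hi := cross_integrand hf hg
  have h1 : ∫ h, ‖∫ z, f z * g (z - h)‖ ≤ ∫ h, ∫ z, ‖f z * g (z - h)‖ := by
    refine integral_mono hi.integral_prod_left.norm hi.norm.integral_prod_left fun h => ?_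
    exact norm_integral_le_integral_norm _
  refine h1.trans (le_of_eq ?_)
  rw [integral_integral_swap (f := fun h z => ‖f z * g (z - h)‖) hi.norm]
  simp_rw [norm_mul, integral_const_mul]
  simp_rw [fun z => integral_sub_left_eq_self (fun x => ‖g x‖) volume z]
  rw [integral_mul_const]

lemma cross_ft {f g : ℝ → ℂ} (hf : Integrable f) (hg : Integrable g) (τ : ℝ) :
    ∫ h : ℝ, Complex.exp (Complex.I * τ * h) * ∫ z, f z * g (z - h) =
      (∫ z : ℝ, Complex.exp (Complex.I * τ * z) * f z) *
      ∫ z : ℝ, Complex.exp (Complex.I * ((-τ : ℝ) : ℂ) * z) * g z := by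
  have hi := cross_integrand (exp_int hf τ) (exp_int hg (-τ))
  have e : ∀ h : ℝ, Complex.exp (Complex.I * τ * h) * ∫ z, f z * g (z - h) =
    ∫ z : ℝ, (Complex.exp (Complex.I * τ * z) * f z) * (Complex.exp (Complex.I * ((-τ : ℝ) : ℂ) * ((z - h : ℝ) : ℂ)) * g (z - h)) := by
    intro h
    rw [← integral_const_mul]
    congr 1; ext z
    have : Complex.exp (Complex.I * τ * h) = Complex.exp (Complex.I * τ * z) * Complex.exp (Complex.I * ((-τ : ℝ) : ℂ) * ((z - h : ℝ) : ℂ)) := by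
      rw [← Complex.exp_add]; congr 1; push_cast; ring
    rw [this]; ring
  simp_rw [e]
  rw [integral_integral_swap (f := fun h z : ℝ => (Complex.exp (Complex.I * τ * z) * f z) * (Complex.exp (Complex.I * ((-τ : ℝ) : ℂ) * ((z - h : ℝ) : ℂ)) * g (z - h))) hi]
  simp_rw [integral_const_mul]
  simp_rw [fun z => integral_sub_left_eq_self (fun x : ℝ => Complex.exp (Complex.I * ((-τ : ℝ) : ℂ) * (x : ℂ)) * g x) volume z]
  rw [integral_mul_const]

noncomputable def Dq (α : ℝ) (p : (ℝ × ℝ) × ℝ) : ℂ := ∫ z : ℝ, qf α p.1.1 z * qf α p.1.2 (z - p.2)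

lemma Dq_meas {α : ℝ} (hα : 0 < α) (hα1 : α < 1) : StronglyMeasurable (Dq α) := by
  have hq := qf_meas hα hα1
  have : Measurable (fun x : ((ℝ × ℝ) × ℝ) × ℝ => qf α x.1.1.1 x.2 * qf α x.1.1.2 (x.2 - x.1.2)) := by
    refine Measurable.mul (hq.comp (g := fun p : ℝ × ℝ => qf α p.1 p.2)
      (f := fun x : ((ℝ × ℝ) × ℝ) × ℝ => (x.1.1.1, x.2)) (by fun_prop)) (hq.comp (g := fun p : ℝ × ℝ => qf α p.1 p.2)
      (f := fun x : ((ℝ × ℝ) × ℝ) × ℝ => (x.1.1.2, x.2 - x.1.2)) (by fun_prop))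
  exact this.stronglyMeasurable.integral_prod_right'

noncomputable def wf (β μ s : ℝ) : ℝ := s ^ (β - 1) * Real.exp (-μ * s)

lemma wf_int {β μ : ℝ} (hβ : 0 < β) (hμ : 0 < μ) : Integrable (wf β μ) (volume.restrict (Ioi 0)) :=
  gamma_int hβ hμ

lemma wf_meas (β μ : ℝ) : Measurable (wf β μ) := by unfold wf; fun_prop

noncomputable def Psi (α β μ τ : ℝ) (p : (ℝ × ℝ) × ℝ) : ℂ :=
  Complex.exp (Complex.I * τ * p.2) * (((wf β μ p.1.1 * wf β μ p.1.2 : ℝ) : ℂ) * Dq α p)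

lemma Psi_int {α β μ : ℝ} (hα : 0 < α) (hα1 : α < 1) (hβ : 0 < β) (hμ : 0 < μ) (τ : ℝ) :
    Integrable (Psi α β μ τ)
      (((volume.restrict (Ioi (0:ℝ))).prod (volume.restrict (Ioi (0:ℝ)))).prod volume) := by
  have hD := (Dq_meas hα hα1).measurable
  have hw := wf_meas β μ
  have hm : Measurable (Psi α β μ τ) := by unfold Psi; fun_prop
  have hpos : ∀ᵐ p : ℝ × ℝ ∂((volume.restrict (Ioi (0:ℝ))).prod (volume.restrict (Ioi (0:ℝ)))),
      0 < p.1 ∧ 0 < p.2 := by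
    rw [Measure.prod_restrict]
    exact ae_restrict_mem (s := Ioi (0:ℝ) ×ˢ Ioi (0:ℝ)) (measurableSet_Ioi.prod measurableSet_Ioi)
  rw [integrable_prod_iff hm.aestronglyMeasurable]
  constructor
  · filter_upwards [hpos] with p hp
    have := (cross_integrand (qf_int hα hα1 hp.1) (qf_int hα hα1 hp.2)).integral_prod_left
    have h2 := exp_int (this.const_mul ((wf β μ p.1 * wf β μ p.2 : ℝ) : ℂ)) τ
    refine h2.congr (Filter.Eventually.of_forall fun h => ?_)
    simp only [Psi, Dq]
  · have hwi : Integrable (fun p : ℝ × ℝ => wf β μ p.1 * wf β μ p.2)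
       ((volume.restrict (Ioi (0:ℝ))).prod (volume.restrict (Ioi (0:ℝ)))) :=
      (wf_int hβ hμ).mul_prod (wf_int hβ hμ)
    refine (hwi.mul_const ((∫ z, ‖hstable α 1 z‖) * ∫ z, ‖hstable α 1 z‖)).mono'
      hm.stronglyMeasurable.norm.integral_prod_right'.aestronglyMeasurable ?_
    filter_upwards [hpos] with p hp
    have h1 : 0 ≤ wf β μ p.1 := mul_nonneg (Real.rpow_nonneg hp.1.le _) (Real.exp_nonneg _)
    have h2 : 0 ≤ wf β μ p.2 := mul_nonneg (Real.rpow_nonneg hp.2.le _) (Real.exp_nonneg _)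
    have hn : ∀ h : ℝ, ‖Psi α β μ τ (p, h)‖ = wf β μ p.1 * wf β μ p.2 * ‖Dq α (p, h)‖ := by
      intro h
      rw [Psi, norm_mul, norm_mul, Complex.norm_real, Real.norm_of_nonneg (mul_nonneg h1 h2), Complex.norm_exp]
      simp
    simp_rw [hn]
    rw [integral_const_mul, Real.norm_of_nonneg (mul_nonneg (mul_nonneg h1 h2) (integral_nonneg fun _ => norm_nonneg _))]
    refine mul_le_mul_of_nonneg_left ?_ (mul_nonneg h1 h2)
    have := cross_norm (qf_int hα hα1 hp.1) (qf_int hα hα1 hp.2)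
    rwa [qf_norm hp.1, qf_norm hp.2] at this

lemma lam_conj {α : ℝ} (τ : ℝ) : lam α (-τ) = starRingEnd ℂ (lam α τ) := by
  rw [lam, lam, map_mul, Complex.conj_ofReal, ← Complex.exp_conj, abs_neg, Real.sign_neg]
  congr 2
  simp only [map_neg, map_mul, Complex.conj_I, Complex.conj_ofReal]
  push_cast; ring

lemma lam_normSq {α : ℝ} (τ : ℝ) : Complex.normSq (lam α τ) = |τ| ^ (2 * α) := by
  rw [lam, Complex.normSq_eq_norm_sq, norm_mul, Complex.norm_real, Complex.norm_exp,
    Real.norm_of_nonneg (Real.rpow_nonneg (abs_nonneg _) _)]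
  simp [mul_comm (2:ℝ) α, Real.rpow_mul (abs_nonneg τ)]

lemma den_eq {α : ℝ} (hα : 0 < α) (μ τ : ℝ) : Complex.normSq (μ + lam α τ) =
    μ ^ 2 + 2 * μ * |τ| ^ α * Real.cos (Real.pi * α / 2) + |τ| ^ (2 * α) := by
  rw [Complex.normSq_add, lam_normSq, Complex.normSq_ofReal, Complex.re_ofReal_mul, Complex.conj_re,
    lam_re' hα]
  ring

lemma J_eq {β μ : ℝ} (hβ : 0 < β) {l : ℂ} (hr : 0 < ((μ : ℂ) + l).re) :
    ∫ s in Ioi (0:ℝ), (wf β μ s : ℂ) * Complex.exp (-(s * l)) =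
      (1 / (μ + l)) ^ (β : ℂ) * (Real.Gamma β : ℂ) := by
  rw [← gamma_complex hβ hr]
  congr 1; ext s
  rw [wf, Complex.ofReal_mul, mul_assoc, Complex.ofReal_exp, ← Complex.exp_add]
  congr 2; push_cast; ring

theorem stmt16 (α μ β σ : ℝ) (hα : α ∈ Set.Ioo (0 : ℝ) 1) (hμ : 0 < μ) (hβ : 0 < β)
    (hσ : 0 < σ) (Cov : ℝ → ℂ)
    (hCov : ∀ h : ℝ, Cov h =
      ((σ ^ 2 / (Real.Gamma β) ^ 2 : ℝ) : ℂ) *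
        ∫ s₁ in Set.Ioi (0 : ℝ), ∫ s₂ in Set.Ioi (0 : ℝ),
          ((s₁ ^ (β - 1) * s₂ ^ (β - 1) * Real.exp (-μ * (s₁ + s₂)) : ℝ) : ℂ) *
            ∫ z : ℝ, hstable α s₁ z * hstable α s₂ (z - h)) :
    ∀ τ : ℝ,
      Integrable (fun h : ℝ => Complex.exp (Complex.I * τ * h) * Cov h) ∧
      ∫ h : ℝ, Complex.exp (Complex.I * τ * h) * Cov h =
        ((σ ^ 2 /
          (μ ^ 2 + 2 * μ * |τ| ^ α * Real.cos (Real.pi * α / 2) + |τ| ^ (2 * α)) ^ β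
          : ℝ) : ℂ) := by
  intro τ
  obtain ⟨hα, hα1⟩ := hα
  set μ0 : Measure ℝ := volume.restrict (Ioi (0:ℝ)) with hμ0
  set K : ℂ := ((σ ^ 2 / (Real.Gamma β) ^ 2 : ℝ) : ℂ) with hK
  have hΨ := Psi_int hα hα1 hβ hμ τ
  rw [← hμ0] at hΨ
  have hae : (fun h : ℝ => K * ∫ p, Psi α β μ τ (p, h) ∂(μ0.prod μ0)) =ᵐ[volume]
      (fun h : ℝ => Complex.exp (Complex.I * τ * h) * Cov h) := by
    filter_upwards [hΨ.prod_left_ae] with h hh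
    rw [hCov h, mul_left_comm, integral_prod _ hh]
    congr 1
    rw [← integral_const_mul]
    refine setIntegral_congr_fun measurableSet_Ioi fun s₁ h1 => ?_
    rw [← integral_const_mul]
    refine setIntegral_congr_fun measurableSet_Ioi fun s₂ h2 => ?_
    simp only [Psi, Dq, qf]
    simp_rw [← hst_scale hα h1, ← hst_scale hα h2]
    congr 2
    rw [wf, wf, mul_add, Real.exp_add]
    push_cast; ring
  refine ⟨(hΨ.integral_prod_right.const_mul K).congr hae, ?_⟩
  rw [← integral_congr_ae hae, integral_const_mul]
  rw [← integral_integral_swap (f := fun p h => Psi α β μ τ (p, h)) hΨ]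
  have hpos : ∀ᵐ p : ℝ × ℝ ∂(μ0.prod μ0), 0 < p.1 ∧ 0 < p.2 := by
    rw [hμ0, Measure.prod_restrict]
    exact ae_restrict_mem (s := Ioi (0:ℝ) ×ˢ Ioi (0:ℝ)) (measurableSet_Ioi.prod measurableSet_Ioi)
  have hin : ∀ᵐ p : ℝ × ℝ ∂(μ0.prod μ0), ∫ h, Psi α β μ τ (p, h) =
      ((wf β μ p.1 : ℂ) * Complex.exp (-(p.1 * lam α τ))) *
      ((wf β μ p.2 : ℂ) * Complex.exp (-(p.2 * lam α (-τ)))) := by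
    filter_upwards [hpos] with p hp
    have h := cross_ft (qf_int hα hα1 hp.1) (qf_int hα hα1 hp.2) τ
    rw [qf_ft hα hα1 hp.1, qf_ft hα hα1 hp.2] at h
    simp only [Psi, Dq, mul_left_comm (Complex.exp _) (Complex.ofReal _)]
    rw [integral_const_mul, h]
    push_cast; ring
  have hre : ∀ τ : ℝ, 0 < ((μ : ℂ) + lam α τ).re := by
    intro τ
    rw [Complex.add_re, lam_re' hα, Complex.ofReal_re]
    have := cos_pos' hα hα1
    positivity
  rw [integral_congr_ae hin, integral_prod_mul (μ := μ0) (ν := μ0)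
    (fun s : ℝ => (wf β μ s : ℂ) * Complex.exp (-(s * lam α τ)))
    (fun s : ℝ => (wf β μ s : ℂ) * Complex.exp (-(s * lam α (-τ)))), hμ0, J_eq hβ (hre τ), J_eq hβ (hre (-τ))]
  have hc : (μ : ℂ) + lam α (-τ) = starRingEnd ℂ (μ + lam α τ) := by
    rw [lam_conj, map_add, Complex.conj_ofReal]
  have hg := gamma_prod (β := β) (hre τ)
  rw [← hc, den_eq hα] at hg
  have hG : (Real.Gamma β : ℂ) ≠ 0 := by exact_mod_cast (Real.Gamma_pos_of_pos hβ).ne'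
  calc _ = K * (Real.Gamma β : ℂ) ^ 2 * ((1 / (μ + lam α τ)) ^ (β : ℂ) * (1 / (μ + lam α (-τ))) ^ (β : ℂ)) := by ring
    _ = _ := by
      rw [hg, hK]
      push_cast
      field_simp
end
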